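/- arXiv:1211.2486 — 2 statements merged into one kernel-verified Lean document; each statement's English description precedes it below -/
import Mathlib

section
/- Let V and H be finite-dimensional complex vector spaces with dim V = q, let ψ : ⋀²V → H be a linear map, and let k ≥ 1 be an integer with 2k ≤ q. Suppose that every non-zero element of the kernel of ψ has rank bigger than 2k (i.e., no non-zero element of ker ψ is a sum of at most k decomposable bivectors). Then there exists a 2k-dimensional linear subspace W ⊆ V such that the complex 0 → Σ²W → W ⊗ V → H is exact, where the first map μ₀ sends the symmetric product w·w′ to w⊗w′ + w′⊗w and the second map μ₁ sends w⊗v to ψ(w ∧ v); exactness means that μ₀ is injective and that the kernel of μ₁ equals the image of μ₀. -/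
open Module ExteriorAlgebra TensorProduct

/-- The wedge product of two vectors, as an element of the second exterior power `⋀²V`. -/
noncomputable def wedge {V : Type*} [AddCommGroup V] [Module ℂ V] (x y : V) : ⋀[ℂ]^2 V :=
  ⟨ExteriorAlgebra.ι ℂ x * ExteriorAlgebra.ι ℂ y, by
    rw [show (⋀[ℂ]^2 V : Submodule ℂ (ExteriorAlgebra ℂ V))
        = (LinearMap.range (ExteriorAlgebra.ι ℂ : V →ₗ[ℂ] ExteriorAlgebra ℂ V)) ^ 2 from rfl,
      pow_two]
    exact Submodule.mul_mem_mul (LinearMap.mem_range_self _ x) (LinearMap.mem_range_self _ y)⟩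

/-- The submodule of symmetry relations defining the second symmetric power `Σ²W`. -/
abbrev Sym2Rel (K : Type*) [CommRing K] (W : Type*) [AddCommGroup W] [Module K W] :
    Submodule K (W ⊗[K] W) :=
  Submodule.span K {x : W ⊗[K] W | ∃ a b : W, x = a ⊗ₜ[K] b - b ⊗ₜ[K] a}

/-- The second symmetric power `Σ²W` of a module `W`, as a quotient of `W ⊗ W`. -/
abbrev Sym2Pow (K : Type*) [CommRing K] (W : Type*) [AddCommGroup W] [Module K W] :=
  (W ⊗[K] W) ⧸ Sym2Rel K W

/-- The symmetric product `w·w' ∈ Σ²W` of two elements of `W`. -/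
noncomputable def Sym2Pow.mk (K : Type*) [CommRing K] {W : Type*} [AddCommGroup W] [Module K W]
    (a b : W) : Sym2Pow K W :=
  Submodule.Quotient.mk (a ⊗ₜ[K] b)

/-!
The bivectors of rank at most `2k` form a cone cut out by homogeneous equations (skew-symmetry and
vanishing of minors), parametrized by `A ↦ A J Aᵀ`. As `ker ψ` meets this cone only in `0`, the
Nullstellensatz makes the coordinate ring of the cone finite over the algebra generated by the
linear forms that define `ψ`. In characteristic zero this extension is generically unramified, so at
a generic point `∑ i, w (inr i) ∧ w (inl i)` the map `ψ` is injective on the image of the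
differential of the parametrization, which is `W ∧ V` for `W` the span of `w`. Hence
`W ⊗ V → ⋀²V` and `W ⊗ V → H` have the same kernel, and the former kernel is `Σ²W` by exactness of
the Koszul complex.
-/

section HomogeneousSystem

open MvPolynomial

variable {σ R : Type*} [CommRing R] {S : Set (MvPolynomial σ R)}

theorem homogeneousComponent_mul_of_isHomogeneous {p q : MvPolynomial σ R} {d : ℕ}
    (hq : q.IsHomogeneous d) (n : ℕ) :
    homogeneousComponent n (p * q) = if d ≤ n then homogeneousComponent (n - d) p * q else 0 := by
  classical
  let _ := MvPolynomial.gradedAlgebra (σ := σ) (R := R)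
  have h := DirectSum.coe_decompose_mul_of_right_mem (homogeneousSubmodule σ R) n (a := p) hq
  simpa only [← decomposition.decompose'_apply] using! h

theorem homogeneousComponent_mem_of_mem_span (hS : ∀ s ∈ S, ∃ d ≠ 0, s.IsHomogeneous d)
    (Q : Submodule (Algebra.adjoin R S) (MvPolynomial σ R)) {n : ℕ}
    (hQ : ∀ m < n, ∀ p : MvPolynomial σ R, p.IsHomogeneous m → p ∈ Q)
    {p : MvPolynomial σ R} (hp : p ∈ Ideal.span S) : homogeneousComponent n p ∈ Q := by
  suffices ∀ h, homogeneousComponent n (h * p) ∈ Q by simpa only [one_mul] using this 1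
  induction hp using Submodule.span_induction with
  | mem s hs =>
    intro h
    obtain ⟨d, hd, hsd⟩ := hS s hs
    rw [homogeneousComponent_mul_of_isHomogeneous hsd, mul_comm]
    split_ifs
    · exact Q.smul_mem ⟨s, Algebra.subset_adjoin hs⟩
        (hQ _ (by omega) _ (homogeneousComponent_isHomogeneous _ h))
    · exact Q.zero_mem
  | zero => simp
  | add p q _ _ hp hq => intro h; rw [mul_add, map_add]; exact Q.add_mem (hp h) (hq h)
  | smul a p _ hp => intro h; rw [smul_eq_mul, ← mul_assoc]; exact hp _

theorem span_restrictTotalDegree_eq_top (hS : ∀ s ∈ S, ∃ d ≠ 0, s.IsHomogeneous d) {D : ℕ}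
    (hD : idealOfVars σ R ^ D ≤ Ideal.span S) :
    Submodule.span (Algebra.adjoin R S) (restrictTotalDegree σ R D : Set (MvPolynomial σ R)) =
      ⊤ := by
  set Q := Submodule.span (Algebra.adjoin R S) (restrictTotalDegree σ R D : Set (MvPolynomial σ R))
  have hQ : ∀ n, ∀ p : MvPolynomial σ R, p.IsHomogeneous n → p ∈ Q := fun n => by
    induction n using Nat.strong_induction_on with
    | _ n ih =>
      intro p hp
      rcases le_total n D with hn | hn
      · exact Submodule.subset_span ((mem_restrictTotalDegree _ _ _).2 (hp.totalDegree_le.trans hn))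
      · rw [← homogeneousComponent_eq_self hp]
        refine homogeneousComponent_mem_of_mem_span hS Q ih (hD ?_)
        refine (mem_pow_idealOfVars_iff' D p).2 fun m hm => hp.coeff_eq_zero ?_
        omega
  refine eq_top_iff.2 fun p _ => ?_
  rw [← sum_homogeneousComponent p]
  exact Q.sum_mem fun n _ => hQ n _ (homogeneousComponent_isHomogeneous n p)

theorem exists_pow_idealOfVars_le_span {F : Type*} [Field F] [IsAlgClosed F] [Finite σ]
    {S : Set (MvPolynomial σ F)} (hS : ∀ x : σ → F, (∀ s ∈ S, eval x s = 0) → x = 0) :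
    ∃ D, idealOfVars σ F ^ D ≤ Ideal.span S := by
  refine Ideal.exists_pow_le_of_le_radical_of_fg ?_ (idealOfVars_fg σ F)
  rw [← vanishingIdeal_zeroLocus_eq_radical (K := F), idealOfVars, Ideal.span_le]
  rintro _ ⟨i, rfl⟩ x hx
  rw [zeroLocus_span] at hx
  simp [hS x hx]

theorem finite_adjoin_of_forall_eval_eq_zero {F : Type*} [Field F] [IsAlgClosed F] [Finite σ]
    {S : Set (MvPolynomial σ F)} (hS : ∀ s ∈ S, ∃ d ≠ 0, s.IsHomogeneous d)
    (hS0 : ∀ x : σ → F, (∀ s ∈ S, eval x s = 0) → x = 0) :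
    Module.Finite (Algebra.adjoin F S) (MvPolynomial σ F) := by
  obtain ⟨D, hD⟩ := exists_pow_idealOfVars_le_span hS0
  obtain ⟨T, hT⟩ := (Module.Finite.iff_fg (N := restrictTotalDegree σ F D)).1 inferInstance
  refine ⟨T, ?_⟩
  rw [← Submodule.span_span_of_tower F, hT, span_restrictTotalDegree_eq_top hS hD]

end HomogeneousSystem

section GenericallyUnramified

variable {F P : Type*}

theorem exists_aeval_derivative_ne_zero {A P : Type*} [CommRing A] [IsDomain A] [CharZero A]
    [CommRing P] [IsDomain P] [Algebra A P] [FaithfulSMul A P] {x : P} (hx : IsAlgebraic A x) :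
    ∃ f : Polynomial A, Polynomial.aeval x f = 0 ∧ Polynomial.aeval x f.derivative ≠ 0 := by
  obtain ⟨f, ⟨hf0, hfx⟩, hmin⟩ := WellFounded.has_min (measure Polynomial.natDegree).wf
    {f : Polynomial A | f ≠ 0 ∧ Polynomial.aeval x f = 0} hx
  have hdeg : f.natDegree ≠ 0 := fun h => by
    rw [Polynomial.eq_C_of_natDegree_eq_zero h] at hf0 hfx
    rw [Polynomial.aeval_C, FaithfulSMul.algebraMap_eq_zero_iff] at hfx
    exact hf0 (by rw [hfx, map_zero])
  refine ⟨f, hfx, fun hd => hmin f.derivative ⟨?_, hd⟩ (Polynomial.natDegree_derivative_lt hdeg)⟩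
  exact fun h => hdeg (Polynomial.derivative_eq_zero.1 h)

theorem derivation_aeval_eq_smul [CommRing F] [CommRing P] [Algebra F P] {M : Type*}
    [AddCommGroup M] [Module F M] [Module P M] [IsScalarTower F P M] (d : Derivation F P M)
    {A : Subalgebra F P} (hd : ∀ a ∈ A, d a = 0) (x : P) (f : Polynomial A) :
    d (Polynomial.aeval x f) = Polynomial.aeval x f.derivative • d x := by
  let d' : Derivation A P M := Derivation.mk'
    { toFun := d
      map_add' := map_add d
      map_smul' := fun a y => by
        rw [Algebra.smul_def, d.leibniz, show d (algebraMap A P a) = 0 from hd _ a.2, smul_zero,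
          add_zero, RingHom.id_apply, algebraMap_smul] }
    d.leibniz
  exact d'.map_aeval f x

theorem exists_ne_zero_forall_derivation_mem [CommRing F] [CommRing P] [IsDomain P] [CharZero P]
    [Algebra F P] {A : Subalgebra F P} {x : P} (hx : IsAlgebraic A x) :
    ∃ g ≠ 0, ∀ (D : Derivation F P P) (I : Ideal P), I.IsPrime → g ∉ I →
      (∀ a ∈ A, D a ∈ I) → D x ∈ I := by
  obtain ⟨f, hfx, hg⟩ := exists_aeval_derivative_ne_zero hx
  refine ⟨_, hg, fun D I hI hgI hD => ?_⟩
  have h := derivation_aeval_eq_smul (I.mkQ.compDer D)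
    (fun a ha => (Submodule.Quotient.mk_eq_zero I).2 (hD a ha)) x f
  rw [hfx, map_zero] at h
  exact (hI.mem_or_mem ((Submodule.Quotient.mk_eq_zero I).1 h.symm)).resolve_left hgI

end GenericallyUnramified

section GenericTangentVector

open MvPolynomial

variable {τ F P H : Type*}

/-- The homogeneous polynomial of degree one with coefficients `φ (Pi.single i 1)`, that is, the
linear form `φ` on `τ → R` as a polynomial in the coordinates. -/
noncomputable def linearFormPolynomial {R : Type*} [CommRing R] [Fintype τ] [DecidableEq τ]
    (φ : Dual R (τ → R)) : MvPolynomial τ R :=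
  ∑ i, φ (Pi.single i 1) • X i

theorem linearFormPolynomial_isHomogeneous {R : Type*} [CommRing R] [Fintype τ] [DecidableEq τ]
    (φ : Dual R (τ → R)) : (linearFormPolynomial φ).IsHomogeneous 1 :=
  IsHomogeneous.sum _ _ _ fun i _ => (homogeneousSubmodule τ R 1).smul_mem _ (isHomogeneous_X R i)

theorem map_linearFormPolynomial {R : Type*} [CommRing R] [Fintype τ] [DecidableEq τ]
    (φ : Dual R (τ → R)) (L : MvPolynomial τ R →ₗ[R] R) :
    L (linearFormPolynomial φ) = φ fun i => L (X i) := by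
  conv_rhs => rw [← Finset.univ_sum_single fun i => L (X i)]
  simp only [linearFormPolynomial, map_sum, map_smul, smul_eq_mul]
  refine Finset.sum_congr rfl fun i _ => ?_
  rw [mul_comm, ← smul_eq_mul, ← map_smul, ← Pi.single_smul, smul_eq_mul, mul_one]

variable [Finite τ] [Field F] [IsAlgClosed F]

theorem isIntegral_adjoin_image [CommRing P] [Algebra F P] (θ : MvPolynomial τ F →ₐ[F] P)
    {S : Set (MvPolynomial τ F)} (hS : ∀ s ∈ S, ∃ d ≠ 0, s.IsHomogeneous d)
    (hS0 : ∀ x : τ → F, (∀ s ∈ S, eval x s = 0) → x = 0) (p : MvPolynomial τ F) :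
    IsIntegral (Algebra.adjoin F (θ '' S)) (θ p) := by
  have := finite_adjoin_of_forall_eval_eq_zero hS hS0
  rw [← AlgHom.map_adjoin]
  exact (Algebra.IsIntegral.isIntegral (R := Algebra.adjoin F S) p).map_of_comp_eq
    (θ.subalgebraMap (Algebra.adjoin F S)).toRingHom θ.toRingHom rfl

theorem exists_ne_zero_forall_derivation_aeval_mem [CharZero F] [CommRing P] [IsDomain P]
    [Algebra F P] (θ : MvPolynomial τ F →ₐ[F] P)
    {S : Set (MvPolynomial τ F)} (hS : ∀ s ∈ S, ∃ d ≠ 0, s.IsHomogeneous d)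
    (hS0 : ∀ x : τ → F, (∀ s ∈ S, eval x s = 0) → x = 0) :
    ∃ g ≠ 0, ∀ (D : Derivation F P P) (I : Ideal P), I.IsPrime → g ∉ I →
      (∀ s ∈ S, D (θ s) ∈ I) → ∀ i, D (θ (X i)) ∈ I := by
  cases nonempty_fintype τ
  have : CharZero P := charZero_of_injective_algebraMap (algebraMap F P).injective
  choose g hg0 hg using fun i : τ => exists_ne_zero_forall_derivation_mem (F := F)
    (isIntegral_adjoin_image θ hS hS0 (X i)).isAlgebraic
  refine ⟨∏ i, g i, Finset.prod_ne_zero_iff.2 fun i _ => hg0 i, fun D I hI hgI hD i => ?_⟩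
  refine hg i D I hI (fun h => hgI (I.mem_of_dvd (Finset.dvd_prod_of_mem g (Finset.mem_univ i)) h))
    fun a ha => ?_
  have h := Derivation.eqOn_adjoin (D1 := I.mkQ.compDer D) (D2 := 0) (s := θ '' S)
    (by rintro _ ⟨s, hs, rfl⟩; exact (Submodule.Quotient.mk_eq_zero I).2 (hD s hs)) ha
  exact (Submodule.Quotient.mk_eq_zero I).1 h

-- `u` is the generic point of a cone on which `ψ` vanishes only at `0`, and `fun i => z (D (u i))`
-- ranges over the tangent vectors at the specialization `z` of `u`: `S` consists of the equations
-- of the cone together with those of `ker ψ`.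
theorem exists_ne_zero_forall_derivation_eq_zero [CharZero F] [CommRing P] [IsDomain P]
    [Algebra F P] [AddCommGroup H] [Module F H] (u : τ → P) (ψ : (τ → F) →ₗ[F] H)
    (hψ : ∀ x : τ → F, (∀ p : MvPolynomial τ F, ∀ d ≠ 0, p.IsHomogeneous d → aeval u p = 0 →
      eval x p = 0) → ψ x = 0 → x = 0) :
    ∃ g ≠ 0, ∀ (D : Derivation F P P) (z : P →ₐ[F] F), z g ≠ 0 →
      ψ (fun i => z (D (u i))) = 0 → ∀ i, z (D (u i)) = 0 := by
  classical
  cases nonempty_fintype τ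
  let S : Set (MvPolynomial τ F) := {p | (∃ d ≠ 0, p.IsHomogeneous d) ∧ aeval u p = 0} ∪
    Set.range fun φ : Dual F H => linearFormPolynomial (φ ∘ₗ ψ)
  have hS : ∀ s ∈ S, ∃ d ≠ 0, s.IsHomogeneous d := by
    rintro _ (⟨h, -⟩ | ⟨φ, rfl⟩)
    · exact h
    · exact ⟨1, one_ne_zero, linearFormPolynomial_isHomogeneous _⟩
  have hS0 : ∀ x : τ → F, (∀ s ∈ S, eval x s = 0) → x = 0 := fun x hx => by
    refine hψ x (fun p d hd hp hpu => hx p (.inl ⟨⟨d, hd, hp⟩, hpu⟩)) ?_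
    refine (Module.forall_dual_apply_eq_zero_iff F _).1 fun φ => ?_
    have h := map_linearFormPolynomial (φ ∘ₗ ψ) (aeval x).toLinearMap
    simpa [aeval_eq_eval, hx _ (.inr ⟨φ, rfl⟩)] using h.symm
  obtain ⟨g, hg0, hg⟩ := exists_ne_zero_forall_derivation_aeval_mem (aeval u) hS hS0
  refine ⟨g, hg0, fun D z hz hD i => ?_⟩
  rw [← aeval_X (R := F) u i]
  refine hg D (RingHom.ker z) (RingHom.ker_isPrime z) hz ?_ i
  rintro _ (⟨-, hp⟩ | ⟨φ, rfl⟩)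
  · rw [hp, map_zero]
    exact zero_mem _
  · have h := map_linearFormPolynomial (φ ∘ₗ ψ)
      (z.toLinearMap ∘ₗ D.toLinearMap ∘ₗ (aeval u).toLinearMap)
    simpa [hD] using h

end GenericTangentVector

section Rank

open Matrix

variable {F l m n o κ : Type*} [Field F] [Fintype n]

theorem exists_linearIndependent_row_submatrix [Finite m] (A : Matrix m n F) {r : ℕ}
    (hr : A.rank = r) :
    ∃ f : Fin r → m, LinearIndependent F (A.submatrix f id).row := by
  obtain ⟨κ, f, hf, hspan, hli⟩ := exists_linearIndependent' F A.row
  cases nonempty_fintype m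
  have := Fintype.ofInjective f hf
  have hcard : Fintype.card κ = r := by
    rw [← hr, rank_eq_finrank_span_row, ← hspan, finrank_span_eq_card hli]
  exact ⟨f ∘ (Fintype.equivFinOfCardEq hcard).symm, hli.comp _ (Equiv.injective _)⟩

theorem exists_submatrix_det_ne_zero [Finite m] (A : Matrix m n F) :
    ∃ (f : Fin A.rank → m) (g : Fin A.rank → n), (A.submatrix f g).det ≠ 0 := by
  obtain ⟨f, hf⟩ := exists_linearIndependent_row_submatrix A rfl
  have hrank : (A.submatrix f id)ᵀ.rank = A.rank := by
    rw [rank_transpose, hf.rank_matrix, Fintype.card_fin]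
  obtain ⟨g, hg⟩ := exists_linearIndependent_row_submatrix _ hrank
  refine ⟨f, g, ?_⟩
  rw [← det_transpose, ← isUnit_iff_ne_zero, ← isUnit_iff_isUnit_det]
  exact linearIndependent_rows_iff_isUnit.1 hg

theorem rank_mul_add_rank_mul_le_of_mul_eq_zero [Finite l] [Fintype m] [Fintype o]
    {A : Matrix l m F} {B : Matrix m n F} {C : Matrix n o F} (h : A * B * C = 0) :
    (A * B).rank + (B * C).rank ≤ B.rank := by
  let a := A.mulVecLin.domRestrict (LinearMap.range B.mulVecLin)
  have hrange : LinearMap.range a = LinearMap.range (A * B).mulVecLin := by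
    rw [mulVecLin_mul, LinearMap.range_domRestrict, LinearMap.range_comp]
  have hker : LinearMap.range (B * C).mulVecLin ≤
      (LinearMap.ker a).map (Submodule.subtype _) := by
    rintro _ ⟨x, rfl⟩
    refine ⟨⟨B *ᵥ (C *ᵥ x), _, rfl⟩, ?_, by simp⟩
    simp [a, ← Matrix.mul_assoc, h]
  have hle := Submodule.finrank_mono hker
  have hadd := a.finrank_range_add_finrank_ker
  rw [Submodule.finrank_map_subtype_eq] at hle
  rw [hrange] at hadd
  unfold Matrix.rank
  omega

theorem rank_sub_mul_inv_mul_add_card_le [Finite m] [Fintype κ] [DecidableEq κ]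
    (M : Matrix m n F) (r : κ → m) (c : κ → n) (h : (M.submatrix r c).det ≠ 0) :
    (M - M.submatrix id c * (M.submatrix r c)⁻¹ * M.submatrix r id).rank + Fintype.card κ ≤
      M.rank := by
  classical
  cases nonempty_fintype m
  let Q := 1 - (1 : Matrix n n F).submatrix id c * (M.submatrix r c)⁻¹ * M.submatrix r id
  have hc : M * (1 : Matrix n n F).submatrix id c = M.submatrix id c :=
    mul_submatrix_one (Equiv.refl n) c M
  have hr : (1 : Matrix m m F).submatrix r id * M = M.submatrix r id :=
    one_submatrix_mul r (Equiv.refl m) M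
  have hrc : (1 : Matrix m m F).submatrix r id * M.submatrix id c = M.submatrix r c :=
    one_submatrix_mul r (Equiv.refl m) (M.submatrix id c)
  have hQ : M * Q = M - M.submatrix id c * (M.submatrix r c)⁻¹ * M.submatrix r id := by
    rw [Matrix.mul_sub, Matrix.mul_one, ← Matrix.mul_assoc, ← Matrix.mul_assoc, hc]
  have hzero : (1 : Matrix m m F).submatrix r id * M * Q = 0 := by
    rw [Matrix.mul_assoc, hQ, Matrix.mul_sub, ← Matrix.mul_assoc, ← Matrix.mul_assoc, hr, hrc,
      mul_nonsing_inv _ (isUnit_iff_ne_zero.2 h), Matrix.one_mul, sub_self]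
  have hrank : Fintype.card κ ≤ (M.submatrix r id).rank := by
    rw [← rank_of_det_ne_zero h]
    exact rank_submatrix_le (M.submatrix r id) id c
  have := rank_mul_add_rank_mul_le_of_mul_eq_zero hzero
  rw [hr, hQ] at this
  omega

end Rank

section Skew

open Matrix

variable {F n : Type*}

theorem mul_J_mul_transpose_apply {R m ι : Type*} [CommRing R] [Fintype ι] [DecidableEq ι]
    (A : Matrix m (ι ⊕ ι) R) (i j : m) :
    (A * J ι R * Aᵀ) i j = ∑ s, (A i (.inr s) * A j (.inl s) - A i (.inl s) * A j (.inr s)) := by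
  simp [J, Matrix.mul_apply, Matrix.fromBlocks, Fintype.sum_sum_type, Matrix.one_apply,
    sub_eq_add_neg, Finset.sum_add_distrib, add_comm]

variable [Field F] [NeZero (2 : F)]

theorem apply_self_eq_zero_of_transpose_eq_neg {Z : Matrix n n F} (hZ : Zᵀ = -Z) (i : n) :
    Z i i = 0 := by
  have h : Z i i = -Z i i := congrFun₂ hZ i i
  rwa [eq_neg_iff_add_eq_zero, ← two_mul, mul_eq_zero_iff_left two_ne_zero] at h

variable [Fintype n]

theorem rank_sub_pivot_add_two_le {Z : Matrix n n F} (hZ : Zᵀ = -Z) {a b : n} (hab : Z a b ≠ 0) :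
    (Z - of fun i j => (Z a b)⁻¹ * (Z i a * Z j b - Z i b * Z j a)).rank + 2 ≤ Z.rank := by
  have hskew : ∀ i j, Z j i = -Z i j := congrFun₂ hZ
  have hpivot : Z.submatrix ![a, b] ![a, b] = !![0, Z a b; -Z a b, 0] := by
    ext i j
    fin_cases i <;> fin_cases j <;>
      simp [apply_self_eq_zero_of_transpose_eq_neg hZ, hskew a b]
  have hinv : (Z.submatrix ![a, b] ![a, b])⁻¹ = !![0, -(Z a b)⁻¹; (Z a b)⁻¹, 0] := by
    refine inv_eq_right_inv ?_
    rw [hpivot]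
    ext i j
    fin_cases i <;> fin_cases j <;> simp [hab]
  have hcorr : Z.submatrix id ![a, b] * !![0, -(Z a b)⁻¹; (Z a b)⁻¹, 0] *
      Z.submatrix ![a, b] id = of fun i j => (Z a b)⁻¹ * (Z i a * Z j b - Z i b * Z j a) := by
    ext i j
    simp only [Matrix.mul_apply, Fin.sum_univ_two, submatrix_apply, of_apply, cons_val_zero,
      cons_val_one, cons_val', cons_val_fin_one, id_eq, hskew j a, hskew j b]
    ring
  have h := rank_sub_mul_inv_mul_add_card_le Z ![a, b] ![a, b] (by simp [hpivot, hab])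
  rwa [hinv, hcorr, Fintype.card_fin] at h

theorem exists_mul_J_mul_transpose_eq (k : ℕ) {Z : Matrix n n F} (hZ : Zᵀ = -Z)
    (hrank : Z.rank ≤ 2 * k) : ∃ A : Matrix n (Fin k ⊕ Fin k) F, A * J (Fin k) F * Aᵀ = Z := by
  induction k generalizing Z with
  | zero =>
    classical
    have hZ0 : toLin' Z = 0 :=
      LinearMap.range_eq_bot.1 (Submodule.finrank_eq_zero.1 (Nat.le_zero.1 hrank))
    exact ⟨0, by simpa using (toLin'.map_eq_zero_iff.1 hZ0).symm⟩
  | succ k ih =>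
    by_cases hZ0 : Z = 0
    · exact ⟨0, by simp [hZ0]⟩
    obtain ⟨a, b, hab⟩ : ∃ a b, Z a b ≠ 0 := by
      by_contra! h
      exact hZ0 (Matrix.ext h)
    have hle := rank_sub_pivot_add_two_le hZ hab
    have hskew : ∀ i j, Z j i = -Z i j := congrFun₂ hZ
    obtain ⟨A, hA⟩ := ih (Z := Z - of fun i j => (Z a b)⁻¹ * (Z i a * Z j b - Z i b * Z j a))
      (by ext i j; simp [hskew i j]; ring) (by omega)
    refine ⟨of fun i => Sum.elim (Fin.cons (Z i b) fun s => A i (.inl s))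
      (Fin.cons ((Z a b)⁻¹ * Z i a) fun s => A i (.inr s)), ?_⟩
    ext i j
    have hAij := congrFun₂ hA i j
    simp only [mul_J_mul_transpose_apply, Matrix.sub_apply, of_apply] at hAij
    simp only [mul_J_mul_transpose_apply, of_apply, Sum.elim_inl, Sum.elim_inr, Fin.sum_univ_succ,
      Fin.cons_zero, Fin.cons_succ, hAij]
    ring

end Skew

section GenericSkew

open Matrix

variable {m n ι κ R P F : Type*}

theorem isHomogeneous_det {σ : Type*} [CommRing R] [Fintype n] [DecidableEq n]
    {M : Matrix n n (MvPolynomial σ R)} {d : ℕ} (hM : ∀ i j, (M i j).IsHomogeneous d) :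
    M.det.IsHomogeneous (Fintype.card n * d) := by
  rw [det_apply]
  refine MvPolynomial.IsHomogeneous.sum _ _ _ fun σ _ => ?_
  rw [Units.smul_def, ← Int.cast_smul_eq_zsmul R]
  refine (MvPolynomial.homogeneousSubmodule _ R _).smul_mem _ ?_
  simpa using MvPolynomial.IsHomogeneous.prod Finset.univ _ (fun _ => d) fun i _ => hM (σ i) i

theorem aeval_det_submatrix_mvPolynomialX [CommRing R] [CommRing P] [Algebra R P] [Fintype κ]
    [DecidableEq κ] (M : Matrix m n P) (f : κ → m) (g : κ → n) :
    MvPolynomial.aeval (fun p => M p.1 p.2) ((mvPolynomialX m n R).submatrix f g).det =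
      (M.submatrix f g).det := by
  rw [AlgHom.map_det]
  congr 1
  ext i j
  simp

theorem det_submatrix_eq_zero_of_rank_lt [CommRing P] [IsDomain P] [Fintype n] [Fintype κ]
    [DecidableEq κ] {M : Matrix m n P} (h : M.rank < Fintype.card κ) (f : κ → m) (g : κ → n) :
    (M.submatrix f g).det = 0 := by
  by_contra hdet
  exact absurd (rank_submatrix_le M f g) (by rwa [rank_of_det_ne_zero hdet, not_le])

theorem exists_ne_zero_forall_linearIndependent_col [Field F] [Fintype m] [Fintype n]
    (h : Fintype.card m ≤ Fintype.card n) :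
    ∃ Δ : MvPolynomial (n × m) F, Δ ≠ 0 ∧ ∀ A : Matrix n m F,
      MvPolynomial.eval (fun p => A p.1 p.2) Δ ≠ 0 → LinearIndependent F A.col := by
  classical
  obtain ⟨e⟩ := Function.Embedding.nonempty_of_card_le h
  refine ⟨MvPolynomial.rename (Prod.map e id) (mvPolynomialX m m F).det, ?_, fun A hA => ?_⟩
  · exact (map_ne_zero_iff _ (MvPolynomial.rename_injective _
      (e.injective.prodMap Function.injective_id))).2 (det_mvPolynomialX_ne_zero m F)
  · rw [MvPolynomial.eval_rename, eval_det_mvPolynomialX] at hA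
    exact (linearIndependent_cols_of_det_ne_zero hA).of_comp (LinearMap.funLeft F F e)

theorem exists_mul_J_mul_transpose_eq_of_forall_eval_eq_zero [Field F] [NeZero (2 : F)]
    [CommRing P] [IsDomain P] [Algebra F P] [Finite n] (k : ℕ) (X : Matrix n (Fin k ⊕ Fin k) P)
    {Z : Matrix n n F}
    (hZ : ∀ p : MvPolynomial (n × n) F, ∀ d ≠ 0, p.IsHomogeneous d →
      MvPolynomial.aeval (fun ij => (X * J (Fin k) P * Xᵀ) ij.1 ij.2) p = 0 →
        MvPolynomial.eval (fun ij => Z ij.1 ij.2) p = 0) :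
    ∃ A : Matrix n (Fin k ⊕ Fin k) F, A * J (Fin k) F * Aᵀ = Z := by
  cases nonempty_fintype n
  refine exists_mul_J_mul_transpose_eq k (Matrix.ext fun i j => ?_) (le_of_not_gt fun hlt => ?_)
  · have h := hZ (MvPolynomial.X (j, i) + MvPolynomial.X (i, j)) 1 one_ne_zero
      ((MvPolynomial.isHomogeneous_X F _).add (MvPolynomial.isHomogeneous_X F _)) (by
        simp only [map_add, MvPolynomial.aeval_X, mul_J_mul_transpose_apply,
          ← Finset.sum_add_distrib]
        exact Finset.sum_eq_zero fun s _ => by ring)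
    simpa [eq_neg_iff_add_eq_zero] using h
  · obtain ⟨f, g, hfg⟩ := exists_submatrix_det_ne_zero Z
    have hrank : (X * J (Fin k) P * Xᵀ).rank < Fintype.card (Fin Z.rank) := by
      rw [Matrix.mul_assoc, Fintype.card_fin]
      refine ((rank_mul_le_left X _).trans (rank_le_card_width X)).trans_lt ?_
      rwa [Fintype.card_sum, Fintype.card_fin, ← two_mul]
    refine hfg ?_
    rw [← aeval_det_submatrix_mvPolynomialX (R := F) Z f g]
    refine hZ _ (Fintype.card (Fin Z.rank) * 1) (by rw [mul_one]; omega)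
      (isHomogeneous_det fun i j => MvPolynomial.isHomogeneous_X F _) ?_
    rw [aeval_det_submatrix_mvPolynomialX, det_submatrix_eq_zero_of_rank_lt hrank]

theorem map_derivation_mul [CommSemiring R] [CommSemiring P] [Algebra R P] [Fintype m]
    (D : Derivation R P P) (M : Matrix n m P) (N : Matrix m κ P) :
    (M * N).map D = M * N.map D + M.map D * N := by
  ext i j
  simp [Matrix.mul_apply, mul_comm, Finset.sum_add_distrib]

variable [CommRing R] [CommRing P] [Algebra R P] [Fintype ι] [DecidableEq ι]

theorem map_derivation_mul_J_mul_transpose (D : Derivation R P P) (X : Matrix n (ι ⊕ ι) P) :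
    (X * J ι P * Xᵀ).map D = X * J ι P * (X.map D)ᵀ + X.map D * J ι P * Xᵀ := by
  have hJ : (J ι P).map D = 0 := by
    ext (i | i) (j | j) <;> simp [J, one_apply, apply_ite D]
  rw [map_derivation_mul, map_derivation_mul, hJ, Matrix.mul_zero, zero_add, transpose_map]

theorem map_map_derivation_mul_J_mul_transpose (z : P →ₐ[R] R) (D : Derivation R P P)
    {X : Matrix n (ι ⊕ ι) P} {v : Matrix n (ι ⊕ ι) R}
    (hX : X.map D = (v * J ι R).map (algebraMap R P)) :
    ((X * J ι P * Xᵀ).map D).map z = X.map z * vᵀ - v * (X.map z)ᵀ := by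
  have hDX : (X.map D).map z = v * J ι R := by
    rw [hX]
    exact Matrix.ext fun i j => z.commutes _
  rw [map_derivation_mul_J_mul_transpose, Matrix.map_add _ (map_add z), Matrix.map_mul,
    Matrix.map_mul, Matrix.map_mul, Matrix.map_mul, transpose_map, transpose_map, hDX, map_J,
    transpose_mul, J_transpose, Matrix.mul_assoc v, J_squared, Matrix.mul_assoc,
    ← Matrix.mul_assoc (J ι R), Matrix.mul_neg, J_squared, neg_neg, Matrix.one_mul,
    Matrix.mul_neg, Matrix.mul_one, Matrix.neg_mul, ← sub_eq_add_neg]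

variable {H : Type*} [Field F] [IsAlgClosed F] [CharZero F] [AddCommGroup H]
  [Module F H] {k : ℕ}

theorem exists_ne_zero_forall_map_derivation_eq_zero [Finite n] [IsDomain P] [Algebra F P]
    (X : Matrix n (Fin k ⊕ Fin k) P) (ψ : Matrix n n F →ₗ[F] H)
    (hψ : ∀ A : Matrix n (Fin k ⊕ Fin k) F,
      ψ (A * J (Fin k) F * Aᵀ) = 0 → A * J (Fin k) F * Aᵀ = 0) :
    ∃ g ≠ 0, ∀ (D : Derivation F P P) (z : P →ₐ[F] F), z g ≠ 0 →
      ψ (((X * J (Fin k) P * Xᵀ).map D).map z) = 0 →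
        ((X * J (Fin k) P * Xᵀ).map D).map z = 0 := by
  obtain ⟨g, hg0, hg⟩ := exists_ne_zero_forall_derivation_eq_zero
    (fun ij : n × n => (X * J (Fin k) P * Xᵀ) ij.1 ij.2)
    (ψ ∘ₗ (LinearEquiv.curry F F n n).toLinearMap) fun x hx hψx => by
      obtain ⟨A, hA⟩ := exists_mul_J_mul_transpose_eq_of_forall_eval_eq_zero k X
        (Z := of (Function.curry x)) hx
      have h0 : of (Function.curry x) = 0 := hA ▸ hψ A (hA ▸ hψx)
      exact funext fun ij => congrFun₂ h0 ij.1 ij.2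
  exact ⟨g, hg0, fun D z hz hD => Matrix.ext fun i j => hg D z hz hD (i, j)⟩

theorem exists_linearIndependent_col_forall_mul_transpose_sub_eq_zero [Fintype n]
    (hk : 2 * k ≤ Fintype.card n) (ψ : Matrix n n F →ₗ[F] H)
    (hψ : ∀ A : Matrix n (Fin k ⊕ Fin k) F,
      ψ (A * J (Fin k) F * Aᵀ) = 0 → A * J (Fin k) F * Aᵀ = 0) :
    ∃ A : Matrix n (Fin k ⊕ Fin k) F, LinearIndependent F A.col ∧
      ∀ v : Matrix n (Fin k ⊕ Fin k) F, ψ (A * vᵀ - v * Aᵀ) = 0 → A * vᵀ - v * Aᵀ = 0 := by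
  let X := mvPolynomialX n (Fin k ⊕ Fin k) F
  obtain ⟨g, hg0, hg⟩ := exists_ne_zero_forall_map_derivation_eq_zero X ψ hψ
  obtain ⟨Δ, hΔ0, hΔ⟩ := exists_ne_zero_forall_linearIndependent_col (F := F)
    (m := Fin k ⊕ Fin k) (n := n) (by simpa [two_mul] using hk)
  obtain ⟨a, ha⟩ : ∃ a, MvPolynomial.eval a (g * Δ) ≠ 0 := by
    by_contra! h
    exact mul_ne_zero hg0 hΔ0 (MvPolynomial.funext fun a => by rw [h, map_zero])
  rw [map_mul] at ha
  refine ⟨of (Function.curry a), hΔ _ (right_ne_zero_of_mul ha), fun v hv => ?_⟩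
  let D := MvPolynomial.mkDerivation F fun p : n × (Fin k ⊕ Fin k) =>
    MvPolynomial.C (σ := n × (Fin k ⊕ Fin k)) ((v * J (Fin k) F) p.1 p.2)
  have hXD : X.map D = (v * J (Fin k) F).map (algebraMap F _) := by
    ext i j
    simp [X, D]
  have hXa : X.map (MvPolynomial.aeval a) = of (Function.curry a) := by
    ext i j
    simp [X]
  have hD := map_map_derivation_mul_J_mul_transpose (MvPolynomial.aeval a) D hXD
  rw [hXa] at hD
  rw [← hD] at hv ⊢
  exact hg D (MvPolynomial.aeval a) (left_ne_zero_of_mul ha) hv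

end GenericSkew

section Koszul

variable {R V : Type*} [CommRing R] [AddCommGroup V] [Module R V]

variable (R V) in
/-- The wedge product `V × V → ⋀²V` as a bilinear map. -/
noncomputable def wedgeBilin : V →ₗ[R] V →ₗ[R] ⋀[R]^2 V :=
  LinearMap.mk₂ R (fun x y => exteriorPower.ιMulti R 2 ![x, y])
    (fun x x' y => (exteriorPower.ιMulti R 2).map_vecCons_add ![y] x x')
    (fun c x y => (exteriorPower.ιMulti R 2).map_vecCons_smul ![y] c x)
    (fun x y y' => Subtype.ext (by simp [mul_add]))
    (fun c x y => Subtype.ext (by simp))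

theorem wedgeBilin_swap (x y : V) : wedgeBilin R V y x = -wedgeBilin R V x y :=
  Subtype.ext <| eq_neg_of_add_eq_zero_left <| by
    simp [wedgeBilin]

theorem wedgeBilin_eq_wedge {V : Type*} [AddCommGroup V] [Module ℂ V] (x y : V) :
    wedgeBilin ℂ V x y = wedge x y :=
  Subtype.ext (by simp [wedgeBilin, wedge])

variable (R V) in
/-- The antisymmetrization `⋀²V → V ⊗ V`, `x ∧ y ↦ x ⊗ y - y ⊗ x`. -/
noncomputable def wedgeToTensor : ⋀[R]^2 V →ₗ[R] V ⊗[R] V :=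
  exteriorPower.alternatingMapLinearEquiv
    { toFun := fun x => x 0 ⊗ₜ x 1 - x 1 ⊗ₜ x 0
      map_update_add' := fun x i => by
        fin_cases i <;> intros <;> simp [TensorProduct.add_tmul, TensorProduct.tmul_add] <;> abel
      map_update_smul' := fun x i => by
        fin_cases i <;> intros <;> simp [TensorProduct.smul_tmul', smul_sub]
      map_eq_zero_of_eq' := fun x i j hx hij => by
        fin_cases i <;> fin_cases j <;> simp_all }

theorem wedgeToTensor_wedgeBilin (x y : V) :
    wedgeToTensor R V (wedgeBilin R V x y) = x ⊗ₜ y - y ⊗ₜ x := by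
  simp [wedgeToTensor, wedgeBilin]

theorem wedgeToTensor_injective [Invertible (2 : R)] :
    Function.Injective (wedgeToTensor R V) := by
  have h : TensorProduct.lift (wedgeBilin R V) ∘ₗ wedgeToTensor R V = (2 : R) • LinearMap.id := by
    ext x
    have hx : exteriorPower.ιMulti R 2 x = wedgeBilin R V (x 0) (x 1) :=
      congrArg _ (List.ofFn_inj.1 rfl)
    simp only [LinearMap.compAlternatingMap_apply, LinearMap.comp_apply, hx,
      wedgeToTensor_wedgeBilin, map_sub, TensorProduct.lift.tmul, wedgeBilin_swap (x 0),
      sub_neg_eq_add, two_smul, LinearMap.add_apply, LinearMap.id_apply]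
  refine .of_comp (f := TensorProduct.lift (wedgeBilin R V)) ?_
  rw [← LinearMap.coe_comp, h]
  exact fun x y hxy => (isUnit_of_invertible (2 : R)).smul_left_cancel.1 hxy

theorem Sym2Pow.mk_comm (a b : V) : Sym2Pow.mk R a b = Sym2Pow.mk R b a :=
  (Submodule.Quotient.eq _).2 (Submodule.subset_span ⟨a, b, rfl⟩)

variable (W : Submodule R V)

/-- The map `Σ²W → W ⊗ V`, `w·w' ↦ w ⊗ w' + w' ⊗ w`. -/
noncomputable def symToTensor : Sym2Pow R W →ₗ[R] W ⊗[R] V :=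
  (Sym2Rel R W).liftQ
    (W.subtype.lTensor W ∘ₗ (LinearMap.id + (TensorProduct.comm R W W).toLinearMap)) <| by
    rw [Submodule.span_le]
    rintro _ ⟨a, b, rfl⟩
    simp

theorem symToTensor_mk (a b : W) :
    symToTensor W (Sym2Pow.mk R a b) = a ⊗ₜ[R] (b : V) + b ⊗ₜ[R] (a : V) := by
  simp [symToTensor, Sym2Pow.mk]

theorem symToTensor_mkQ (ρ : W ⊗[R] W) :
    symToTensor W ((Sym2Rel R W).mkQ ρ) =
      W.subtype.lTensor W (ρ + TensorProduct.comm R W W ρ) :=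
  rfl

/-- The map `W ⊗ V → ⋀²V`, `w ⊗ v ↦ w ∧ v`. -/
noncomputable def wedgeTensor : W ⊗[R] V →ₗ[R] ⋀[R]^2 V :=
  TensorProduct.lift (wedgeBilin R V ∘ₗ W.subtype)

theorem wedgeTensor_tmul (w : W) (v : V) :
    wedgeTensor W (w ⊗ₜ[R] v) = wedgeBilin R V w v :=
  rfl

theorem wedgeToTensor_wedgeTensor (τ : W ⊗[R] V) :
    wedgeToTensor R V (wedgeTensor W τ) =
      W.subtype.rTensor V τ - TensorProduct.comm R V V (W.subtype.rTensor V τ) := by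
  induction τ with
  | zero => simp
  | add τ τ' h h' => simp only [map_add, h, h']; abel
  | tmul w v => simp [wedgeTensor_tmul, wedgeToTensor_wedgeBilin]

theorem wedgeTensor_symToTensor (x : Sym2Pow R W) : wedgeTensor W (symToTensor W x) = 0 := by
  suffices h : wedgeTensor W ∘ₗ symToTensor W = 0 from LinearMap.congr_fun h x
  refine Submodule.linearMap_qext _ (TensorProduct.ext' fun a b => ?_)
  change wedgeTensor W (symToTensor W (Sym2Pow.mk R a b)) = 0
  rw [symToTensor_mk, map_add, wedgeTensor_tmul, wedgeTensor_tmul, wedgeBilin_swap (a : V) b,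
    add_neg_cancel]

variable {W} [Invertible (2 : R)] {π : V →ₗ[R] W}

theorem symToTensor_injective (hπ : ∀ w : W, π w = w) :
    Function.Injective (symToTensor W) := by
  have h : (Sym2Rel R W).mkQ ∘ₗ π.lTensor W ∘ₗ symToTensor W = (2 : R) • LinearMap.id := by
    refine Submodule.linearMap_qext _ (TensorProduct.ext' fun a b => ?_)
    change (Sym2Rel R W).mkQ (π.lTensor W (symToTensor W (Sym2Pow.mk R a b))) =
      (2 : R) • Sym2Pow.mk R a b
    rw [symToTensor_mk, map_add, map_add, LinearMap.lTensor_tmul, LinearMap.lTensor_tmul, hπ, hπ,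
      two_smul]
    exact congrArg _ (Sym2Pow.mk_comm b a)
  refine .of_comp (f := (Sym2Rel R W).mkQ ∘ₗ π.lTensor W) ?_
  rw [← LinearMap.coe_comp, LinearMap.comp_assoc, h]
  exact fun x y hxy => (isUnit_of_invertible (2 : R)).smul_left_cancel.1 hxy

theorem exact_symToTensor_wedgeTensor (hπ : ∀ w : W, π w = w) :
    Function.Exact (symToTensor W) (wedgeTensor W) := by
  refine fun τ => ⟨fun hτ => ?_, fun ⟨x, hx⟩ => hx ▸ wedgeTensor_symToTensor W x⟩
  have hsymm : W.subtype.rTensor V τ = TensorProduct.comm R V V (W.subtype.rTensor V τ) := by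
    rw [← sub_eq_zero, ← wedgeToTensor_wedgeTensor, hτ, map_zero]
  have hπi : π ∘ₗ W.subtype = LinearMap.id := LinearMap.ext hπ
  let ρ := π.lTensor W τ
  have hτρ : τ = W.subtype.lTensor W (TensorProduct.comm R W W ρ) :=
    calc
      τ = π.rTensor V (W.subtype.rTensor V τ) := by
        rw [← LinearMap.rTensor_comp_apply, hπi, LinearMap.rTensor_id_apply]
      _ = π.rTensor V (TensorProduct.comm R V V (W.subtype.rTensor V τ)) := by rw [← hsymm]
      _ = W.subtype.lTensor W (TensorProduct.comm R W W ρ) := by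
        rw [LinearMap.rTensor_comm, LinearMap.lTensor_comm, ← LinearMap.comp_apply (π.lTensor V),
          LinearMap.lTensor_comp_rTensor, ← LinearMap.rTensor_comp_lTensor, LinearMap.comp_apply]
  have hρ : ρ = TensorProduct.comm R W W ρ :=
    (congrArg (π.lTensor W) hτρ).trans <| by
      rw [← LinearMap.lTensor_comp_apply, hπi, LinearMap.lTensor_id_apply]
  refine ⟨(⅟2 : R) • (Sym2Rel R W).mkQ ρ, ?_⟩
  rw [map_smul, symToTensor_mkQ, ← hρ, ← two_smul R, map_smul, invOf_smul_smul, hρ, ← hτρ]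

end Koszul

section BivectorMatrix

open Matrix

variable {R V n ι σ : Type*} [CommRing R] [AddCommGroup V] [Module R V] [Finite n]
  (e : Basis n R V)

/-- The skew-symmetric matrix of coordinates of a bivector with respect to a basis: the one of
`x ∧ y` has `(i, j)` entry `xᵢ yⱼ - yᵢ xⱼ`. -/
noncomputable def bivectorMatrix : ⋀[R]^2 V →ₗ[R] Matrix n n R :=
  ((e.tensorProduct e).equivFun ≪≫ₗ LinearEquiv.curry R R n n ≪≫ₗ ofLinearEquiv R).toLinearMap ∘ₗ
    wedgeToTensor R V

theorem bivectorMatrix_injective [Invertible (2 : R)] : Function.Injective (bivectorMatrix e) := by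
  rw [bivectorMatrix, LinearMap.coe_comp]
  exact (LinearEquiv.injective _).comp wedgeToTensor_injective

theorem bivectorMatrix_wedgeBilin_apply (x y : V) (i j : n) :
    bivectorMatrix e (wedgeBilin R V x y) i j =
      e.repr x i * e.repr y j - e.repr y i * e.repr x j := by
  simp [bivectorMatrix, wedgeToTensor_wedgeBilin, mul_comm]

theorem bivectorMatrix_sum_wedgeBilin [Fintype σ] (w v : σ → V) :
    bivectorMatrix e (∑ s, wedgeBilin R V (w s) (v s)) =
      e.toMatrix w * (e.toMatrix v)ᵀ - e.toMatrix v * (e.toMatrix w)ᵀ := by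
  ext i j
  simp [Matrix.sum_apply, Matrix.mul_apply, bivectorMatrix_wedgeBilin_apply, Basis.toMatrix_apply]

theorem bivectorMatrix_sum_wedgeBilin_inr_inl [Fintype ι] [DecidableEq ι] (w : ι ⊕ ι → V) :
    bivectorMatrix e (∑ i, wedgeBilin R V (w (.inr i)) (w (.inl i))) =
      e.toMatrix w * J ι R * (e.toMatrix w)ᵀ := by
  ext i j
  simp [Matrix.sum_apply, mul_J_mul_transpose_apply, bivectorMatrix_wedgeBilin_apply,
    Basis.toMatrix_apply]

end BivectorMatrix

section GenericSubspace

open Matrix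

variable {F V H : Type*} [Field F] [IsAlgClosed F] [CharZero F] [AddCommGroup V] [Module F V]
  [FiniteDimensional F V] [AddCommGroup H] [Module F H] {k : ℕ}

theorem exists_linearIndependent_forall_sum_wedgeBilin_eq_zero (hk : 2 * k ≤ finrank F V)
    (ψ : ⋀[F]^2 V →ₗ[F] H)
    (hψ : ∀ x y : Fin k → V, ψ (∑ i, wedgeBilin F V (x i) (y i)) = 0 →
      ∑ i, wedgeBilin F V (x i) (y i) = 0) :
    ∃ w : Fin k ⊕ Fin k → V, LinearIndependent F w ∧ ∀ v : Fin k ⊕ Fin k → V,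
      ψ (∑ s, wedgeBilin F V (w s) (v s)) = 0 → ∑ s, wedgeBilin F V (w s) (v s) = 0 := by
  have : Invertible (2 : F) := invertibleOfNonzero two_ne_zero
  let e := finBasis F V
  obtain ⟨ξ, hξ⟩ := (bivectorMatrix e).exists_leftInverse_of_injective
    (LinearMap.ker_eq_bot.2 (bivectorMatrix_injective e))
  replace hξ : ∀ x, ξ (bivectorMatrix e x) = x := LinearMap.congr_fun hξ
  have htoMatrix : ∀ A : Matrix _ (Fin k ⊕ Fin k) F, ∃ w, e.toMatrix w = A := fun A =>
    ⟨fun s => e.equivFun.symm (A.col s),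
      Matrix.ext fun i s => congrFun (e.equivFun.apply_symm_apply (A.col s)) i⟩
  obtain ⟨A, hA, hAv⟩ := exists_linearIndependent_col_forall_mul_transpose_sub_eq_zero
    (by simpa using hk) (ψ ∘ₗ ξ) fun A => by
      obtain ⟨w, rfl⟩ := htoMatrix A
      rw [← bivectorMatrix_sum_wedgeBilin_inr_inl, LinearMap.comp_apply, hξ]
      exact fun h => by rw [hψ _ _ h, map_zero]
  obtain ⟨w, rfl⟩ := htoMatrix A
  refine ⟨w, hA.of_comp e.equivFun.toLinearMap, fun v hv => bivectorMatrix_injective e ?_⟩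
  rw [map_zero, bivectorMatrix_sum_wedgeBilin]
  refine hAv _ ?_
  rw [← bivectorMatrix_sum_wedgeBilin, LinearMap.comp_apply, hξ, hv]

theorem stmt0_general (hk : 2 * k ≤ finrank F V) (ψ : ⋀[F]^2 V →ₗ[F] H)
    (hψ : ∀ x y : Fin k → V, ψ (∑ i, wedgeBilin F V (x i) (y i)) = 0 →
      ∑ i, wedgeBilin F V (x i) (y i) = 0) :
    ∃ W : Submodule F V, finrank F W = 2 * k ∧ Function.Injective (symToTensor W) ∧
      Function.Exact (symToTensor W) (ψ ∘ₗ wedgeTensor W) := by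
  obtain ⟨w, hw, hwv⟩ := exists_linearIndependent_forall_sum_wedgeBilin_eq_zero hk ψ hψ
  let W := Submodule.span F (Set.range w)
  have hker : ∀ τ, ψ (wedgeTensor W τ) = 0 → wedgeTensor W τ = 0 := fun τ => by
    obtain ⟨v, rfl⟩ := TensorProduct.eq_repr_basis_left (Basis.span hw) τ
    have h : wedgeTensor W (v.sum fun s x => Basis.span hw s ⊗ₜ x) =
        ∑ s, wedgeBilin F V (w s) (v s) := by
      rw [Finsupp.sum_fintype _ _ fun s => TensorProduct.tmul_zero _ _, map_sum]
      exact Finset.sum_congr rfl fun s _ => by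
        rw [wedgeTensor_tmul, Basis.span_apply hw]
    rw [h]
    exact hwv v
  have : Invertible (2 : F) := invertibleOfNonzero two_ne_zero
  obtain ⟨π, hπ⟩ := W.subtype.exists_leftInverse_of_injective W.ker_subtype
  replace hπ : ∀ a : W, π a = a := LinearMap.congr_fun hπ
  refine ⟨W, by simp [W, finrank_span_eq_card hw, two_mul], symToTensor_injective hπ, fun τ => ?_⟩
  rw [← exact_symToTensor_wedgeTensor hπ τ]
  exact ⟨hker τ, fun h => by rw [LinearMap.comp_apply, h, map_zero]⟩

end GenericSubspace

/-- **Theorem 4.2**: let `ψ : ⋀²V → H` be a linear map of finite-dimensional complex vector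
spaces with `dim V = q`, and let `1 ≤ k` with `2k ≤ q`. If every non-zero element of `ker ψ`
has rank bigger than `2k` (i.e. no non-zero element of `ker ψ` is a sum of at most `k`
decomposable bivectors), then there is a `2k`-dimensional subspace `W ⊆ V` such that the complex
`0 → Σ²W → W ⊗ V → H` is exact, where `μ₀(w·w') = w⊗w' + w'⊗w` and `μ₁(w⊗v) = ψ(w ∧ v)`:
`μ₀` is injective and `ker μ₁ = im μ₀`. -/
theorem stmt0 {V H : Type*} [AddCommGroup V] [Module ℂ V] [FiniteDimensional ℂ V]
    [AddCommGroup H] [Module ℂ H] [FiniteDimensional ℂ H]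
    (q k : ℕ) (hq : Module.finrank ℂ V = q) (hk : 1 ≤ k) (hkq : 2 * k ≤ q)
    (ψ : (⋀[ℂ]^2 V) →ₗ[ℂ] H)
    (hker : ∀ v : ⋀[ℂ]^2 V, ψ v = 0 → v ≠ 0 →
      ¬ ∃ x y : Fin k → V, v = ∑ i, wedge (x i) (y i)) :
    ∃ W : Submodule ℂ V, Module.finrank ℂ W = 2 * k ∧
      ∃ (μ₀ : Sym2Pow ℂ W →ₗ[ℂ] (W ⊗[ℂ] V)) (μ₁ : (W ⊗[ℂ] V) →ₗ[ℂ] H),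
        (∀ a b : W, μ₀ (Sym2Pow.mk ℂ a b) = a ⊗ₜ[ℂ] (b : V) + b ⊗ₜ[ℂ] (a : V)) ∧
        (∀ (a : W) (v : V), μ₁ (a ⊗ₜ[ℂ] v) = ψ (wedge (a : V) v)) ∧
        Function.Injective μ₀ ∧ LinearMap.ker μ₁ = LinearMap.range μ₀ := by
  obtain ⟨W, hW, hinj, hexact⟩ := stmt0_general (hq ▸ hkq) ψ fun x y h => by
    simp only [wedgeBilin_eq_wedge] at h ⊢
    exact by_contra fun h0 => hker _ h h0 ⟨x, y, rfl⟩
  exact ⟨W, hW, symToTensor W, ψ ∘ₗ wedgeTensor W, symToTensor_mk W,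
    fun a v => congrArg ψ (wedgeBilin_eq_wedge _ _), hinj, hexact.linearMap_ker_eq⟩
end

section
/- Let V and H be finite-dimensional complex vector spaces with dim V = q ≥ 1, let d ≥ 2 be an integer, and let ψ : ⋀²V → H be a linear map. Suppose that every non-zero element of the kernel of ψ has rank bigger than 2·min(⌊q/2⌋, d−1). Then dim H ≥ (q choose 2) if q ≤ 2d−1, and dim H ≥ 2(d−1)q − (2d−1 choose 2) if q ≥ 2d. -/
open Module ExteriorAlgebra

/-!
In a generic alternating matrix of rank `2k` and size `2k + m`, the `C(2k, 2) + 2km` entries above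
the diagonal in the first `2k` rows are algebraically independent: the remaining block is determined
by them. Such a matrix `P` is the generic point of the cone of bivectors of rank at most `2k`, which
meets `ker ψ` only in `0`.

The components of `ψ` are `dim H` linear forms without a common zero on the projectivised cone, so
the entries of `P` are integral over the algebra generated by the values of these forms at `P`.
Indeed, if a valuation bounded by `1` on that algebra exceeded `1` at some entry, then dividing `P`
by its largest entry and reducing modulo the maximal ideal would give a nonzero bivector of rank at
most `2k` killed by `ψ`. Comparing transcendence degrees, `C(2k, 2) + 2km ≤ dim H`.
-/

section HomogeneousSpecialization

open MvPolynomial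

theorem aeval_mul_right_of_isHomogeneous {R S ι : Type*} [CommSemiring R] [CommSemiring S]
    [Algebra R S] {f : MvPolynomial ι R} {n : ℕ} (hf : f.IsHomogeneous n) (p : ι → S) (c : S) :
    aeval (fun i ↦ p i * c) f = aeval p f * c ^ n := by
  simp only [aeval_def, eval₂_eq, Finset.sum_mul]
  refine Finset.sum_congr rfl fun d hd ↦ ?_
  have hdeg : ∑ i ∈ d.support, d i = n := by
    rw [← hf (mem_support_iff.mp hd), Pi.one_def, ← Finsupp.degree_eq_weight_one, Finsupp.degree]
    rfl
  simp only [mul_pow, Finset.prod_mul_distrib, Finset.prod_pow_eq_pow_sum, hdeg, mul_assoc]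

variable {F L ι : Type*} [Field F] [Field L] [Algebra F L]

theorem card_le_card_of_algebraicIndependent_of_isAlgebraic {σ κ : Type*} [Fintype σ] [Fintype κ]
    {x : σ → L} (hx : AlgebraicIndependent F x) (y : κ → L)
    (hxy : ∀ s, IsAlgebraic (Algebra.adjoin F (Set.range y)) (x s)) :
    Fintype.card σ ≤ Fintype.card κ := by
  have hsub : Set.range x ⊆ (AlgebraicIndependent.matroid F L).closure (Set.range y) := by
    rw [AlgebraicIndependent.matroid_closure_eq]
    rintro _ ⟨s, rfl⟩
    exact hxy s
  have hind : (AlgebraicIndependent.matroid F L).Indep (Set.range x) := hx.coe_range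
  suffices (Fintype.card σ : ℕ∞) ≤ Fintype.card κ by exact_mod_cast this
  calc (Fintype.card σ : ℕ∞)
      = (Set.range x).encard := by rw [← Set.image_univ, hx.injective.encard_image, Set.encard_univ,
          ENat.card_eq_coe_fintype_card]
    _ ≤ (AlgebraicIndependent.matroid F L).eRk (Set.range y) := by
        rw [← Matroid.eRk_closure_eq]; exact hind.encard_le_eRk_of_subset hsub
    _ ≤ (Set.range y).encard := Matroid.eRk_le_encard _ _
    _ ≤ Fintype.card κ := by
        simpa [Set.encard_univ] using Set.encard_image_le y Set.univ

/-- The point `a` is a *homogeneous specialization* of `p` if every homogeneous polynomial over `F`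
vanishing at `p` vanishes at `a`: a nonzero `a` represents a point of the projective `F`-variety
whose generic point has homogeneous coordinates `p`. -/
def IsHomogeneousSpecialization (p : ι → L) (a : ι → F) : Prop :=
  ∀ ⦃f : MvPolynomial ι F⦄ ⦃n : ℕ⦄, f.IsHomogeneous n → aeval p f = 0 → eval a f = 0

variable [IsAlgClosed F] [Finite ι] {p : ι → L}

theorem exists_eval_eq_zero_of_valuation_lt (O : ValuationSubring L)
    (hFO : ∀ c : F, algebraMap F L c ∈ O) {i₀ : ι} (hi₀ : p i₀ ≠ 0)
    (hmax : ∀ i, O.valuation (p i) ≤ O.valuation (p i₀)) :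
    ∃ a : ι → F, a i₀ = 1 ∧ ∀ ⦃f : MvPolynomial ι F⦄ ⦃n : ℕ⦄, f.IsHomogeneous n →
      O.valuation (aeval p f) < O.valuation (p i₀) ^ n → eval a f = 0 := by
  have hv₀ : O.valuation (p i₀) ≠ 0 := (map_ne_zero _).mpr hi₀
  have hmem (i : ι) : p i * (p i₀)⁻¹ ∈ O := by
    rw [← O.valuation_le_one_iff, map_mul, map_inv₀, ← div_eq_mul_inv]
    exact div_le_one_of_le₀ (hmax i) zero_le
  let θ : MvPolynomial ι F →+* O :=
    eval₂Hom ((algebraMap F L).codRestrict O hFO) fun i ↦ ⟨p i * (p i₀)⁻¹, hmem i⟩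
  have hθ (f : MvPolynomial ι F) : (θ f : L) = aeval (fun i ↦ p i * (p i₀)⁻¹) f :=
    eval₂_comp_left O.subtype _ _ f
  -- The residue field of `O` may be larger than `F`; the Nullstellensatz still yields an `F`-point.
  obtain ⟨M, hM, hle⟩ := Ideal.exists_le_maximal _
    (Ideal.comap_ne_top θ (IsLocalRing.maximalIdeal.isMaximal O).ne_top)
  obtain ⟨a, rfl⟩ := isMaximal_iff_eq_vanishingIdeal_singleton.mp hM
  have ha {f : MvPolynomial ι F} (hf : O.valuation (θ f : L) < 1) : eval a f = 0 :=
    (mem_vanishingIdeal_singleton_iff a f).mp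
      (hle ((O.valuation_lt_one_iff _).mpr hf))
  refine ⟨a, ?_, fun f n hf hlt ↦ ha ?_⟩
  · have h1 : eval a (X i₀ - 1) = 0 := ha (by simp [hθ, hi₀])
    simpa [sub_eq_zero] using h1
  · rw [hθ, aeval_mul_right_of_isHomogeneous hf, map_mul, map_pow, map_inv₀, inv_pow,
      ← div_eq_mul_inv]
    exact (div_lt_one₀ (pow_pos (zero_lt_iff.mpr hv₀) n)).mpr hlt

theorem isIntegral_adjoin_of_forall_exists_eval_ne_zero {κ : Type*} {h : κ → MvPolynomial ι F}
    {n : κ → ℕ} (hh : ∀ j, (h j).IsHomogeneous (n j)) (hn : ∀ j, n j ≠ 0)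
    (H : ∀ a : ι → F, a ≠ 0 → IsHomogeneousSpecialization p a → ∃ j, eval a (h j) ≠ 0) (i : ι) :
    IsIntegral (Algebra.adjoin F (Set.range fun j ↦ aeval p (h j))) (p i) := by
  suffices p i ∈ (integralClosure (Subring.closure
      (Set.range (algebraMap F L) ∪ Set.range fun j ↦ aeval p (h j))) L).toSubring by
    rwa [← Algebra.adjoin_eq_ring_closure] at this
  rw [← iInf_valuationSubring_superset, Subring.mem_iInf]
  rintro ⟨O, hO⟩
  have : Nonempty ι := ⟨i⟩
  obtain ⟨i₀, hi₀⟩ := Finite.exists_max fun i ↦ O.valuation (p i)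
  suffices O.valuation (p i₀) ≤ 1 from (O.valuation_le_one_iff _).mp ((hi₀ i).trans this)
  by_contra! hlt
  have hp₀ : p i₀ ≠ 0 := fun h0 ↦ by simp [h0] at hlt
  obtain ⟨a, ha₀, ha⟩ := exists_eval_eq_zero_of_valuation_lt O (fun c ↦ hO (.inl ⟨c, rfl⟩)) hp₀ hi₀
  have hspec : IsHomogeneousSpecialization p a := fun f n hf h0 ↦ ha hf <| by
    simpa [h0] using pow_pos (zero_lt_one.trans hlt) n
  obtain ⟨j, hj⟩ := H a (fun h0 ↦ by simp [h0] at ha₀) hspec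
  have hle : O.valuation (aeval p (h j)) ≤ 1 := (O.valuation_le_one_iff _).mpr (hO (.inr ⟨j, rfl⟩))
  exact hj (ha (hh j) (hle.trans_lt (one_lt_pow₀ hlt (hn j))))

theorem card_le_finrank_of_forall_map_ne_zero {H : Type*} [AddCommGroup H] [Module F H]
    [FiniteDimensional F H] {σ : Type*} [Fintype σ] {s : σ → ι}
    (hs : AlgebraicIndependent F (p ∘ s)) (γ : (ι → F) →ₗ[F] H)
    (hγ : ∀ a : ι → F, a ≠ 0 → IsHomogeneousSpecialization p a → γ a ≠ 0) :
    Fintype.card σ ≤ finrank F H := by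
  classical
  have := Fintype.ofFinite ι
  let c := finBasis F H
  let h := γ.toMvPolynomial (Pi.basisFun F ι) c
  have hh (a : ι → F) (j) : eval a (h j) = c.repr (γ a) j :=
    γ.toMvPolynomial_eval_eq_apply (Pi.basisFun F ι) c j ((Pi.basisFun F ι).repr a)
  have hint := isIntegral_adjoin_of_forall_exists_eval_ne_zero (p := p) (h := h)
    (γ.toMvPolynomial_isHomogeneous _ _) (fun _ ↦ one_ne_zero) fun a ha₀ ha ↦ by
      by_contra! hall
      refine hγ a ha₀ ha (c.forall_coord_eq_zero_iff.mp fun j ↦ ?_)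
      rw [c.coord_apply, ← hh, hall]
  simpa using card_le_card_of_algebraicIndependent_of_isAlgebraic hs
    (fun j ↦ aeval p (h j)) fun t ↦ (hint (s t)).isAlgebraic

end HomogeneousSpecialization

section MvPolynomialX

open MvPolynomial Matrix

variable {R S m n l : Type*} [CommRing R] [CommRing S] [Algebra R S] [Fintype l] [DecidableEq l]

theorem isHomogeneous_det_submatrix_mvPolynomialX (f : l → m) (g : l → n) :
    ((mvPolynomialX m n R).submatrix f g).det.IsHomogeneous (Fintype.card l) := by
  rw [det_apply]
  refine IsHomogeneous.sum _ _ _ fun σ _ ↦ ?_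
  rw [Units.smul_def, ← Int.cast_smul_eq_zsmul R, smul_eq_C_mul, ← zero_add (Fintype.card l)]
  refine (isHomogeneous_C _ _).mul ?_
  simpa using IsHomogeneous.prod Finset.univ _ (fun _ ↦ 1)
    fun i _ ↦ isHomogeneous_X R (f (σ i), g i)

theorem aeval_det_submatrix_mvPolynomialX_s2 (A : Matrix m n S) (f : l → m) (g : l → n) :
    aeval (fun z ↦ A z.1 z.2) ((mvPolynomialX m n R).submatrix f g).det =
      (A.submatrix f g).det := by
  rw [AlgHom.map_det]
  congr 1
  ext
  simp

end MvPolynomialX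

section RankMinors

open scoped Matrix

variable {K m n : Type*} [Field K] [Finite m] [Fintype n]

theorem exists_linearIndependent_rows_of_le_rank (A : Matrix m n K) {r : ℕ} (hr : r ≤ A.rank) :
    ∃ f : Fin r → m, LinearIndependent K fun i ↦ A (f i) := by
  rw [A.rank_eq_finrank_span_row] at hr
  obtain ⟨g, hg, -, hli⟩ := Submodule.exists_fun_fin_finrank_span_eq K (Set.range A.row)
  choose f hf using hg
  refine ⟨fun i ↦ f (Fin.castLE hr i), ?_⟩
  have hfg : (fun i ↦ A (f (Fin.castLE hr i))) = g ∘ Fin.castLE hr := funext fun i ↦ hf _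
  exact hfg ▸ hli.comp _ (Fin.castLE_injective hr)

theorem exists_det_submatrix_ne_zero_of_le_rank (A : Matrix m n K) {r : ℕ} (hr : r ≤ A.rank) :
    ∃ (f : Fin r → m) (g : Fin r → n), (A.submatrix f g).det ≠ 0 := by
  obtain ⟨f, hf⟩ := exists_linearIndependent_rows_of_le_rank A hr
  have hrank : (A.submatrix f id)ᵀ.rank = r := by
    rw [Matrix.rank_transpose, LinearIndependent.rank_matrix (M := A.submatrix f id) hf,
      Fintype.card_fin]
  obtain ⟨g, hg⟩ := exists_linearIndependent_rows_of_le_rank _ hrank.ge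
  refine ⟨f, g, ?_⟩
  rw [← Matrix.det_transpose]
  exact ((Matrix.isUnit_iff_isUnit_det _).mp
    (Matrix.linearIndependent_rows_iff_isUnit.mp hg)).ne_zero

theorem rank_lt_iff_forall_det_submatrix_eq_zero {A : Matrix m n K} {r : ℕ} :
    A.rank < r ↔ ∀ (f : Fin r → m) (g : Fin r → n), (A.submatrix f g).det = 0 := by
  refine ⟨fun hr f g ↦ ?_, fun h ↦ ?_⟩
  · by_contra hdet
    have hle := A.rank_submatrix_le f g
    rw [Matrix.rank_of_det_ne_zero hdet, Fintype.card_fin] at hle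
    exact hr.not_ge hle
  · by_contra! hr
    obtain ⟨f, g, hdet⟩ := exists_det_submatrix_ne_zero_of_le_rank A hr
    exact hdet (h f g)

theorem IsHomogeneousSpecialization.rank_le {F L : Type*} [Field F] [Field L] [Algebra F L]
    {P : Matrix m n L} {A : Matrix m n F} {r : ℕ}
    (h : IsHomogeneousSpecialization (fun z : m × n ↦ P z.1 z.2) fun z ↦ A z.1 z.2)
    (hP : P.rank ≤ r) : A.rank ≤ r := by
  rw [← Nat.lt_succ_iff, rank_lt_iff_forall_det_submatrix_eq_zero] at hP ⊢
  intro f g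
  rw [← aeval_det_submatrix_mvPolynomialX_s2 (R := F)]
  exact h (isHomogeneous_det_submatrix_mvPolynomialX f g)
    ((aeval_det_submatrix_mvPolynomialX_s2 P f g).trans (hP f g))

end RankMinors

section Alternating

open Matrix

/-- An *alternating* matrix: skew-symmetric with zero diagonal, the second condition being
independent of the first in characteristic two. -/
structure IsAlternating {R n : Type*} [Ring R] (A : Matrix n n R) : Prop where
  transpose_eq_neg : Aᵀ = -A
  diag_eq_zero : ∀ i, A i i = 0

section Ring

variable {R n : Type*} [Ring R] {A B : Matrix n n R}

theorem IsAlternating.apply_swap (hA : IsAlternating A)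
    (i j : n) : A j i = -A i j :=
  congrFun (congrFun hA.transpose_eq_neg i) j

theorem IsAlternating.sub (hA : IsAlternating A) (hB : IsAlternating B) :
    IsAlternating (A - B) where
  transpose_eq_neg := by
    rw [transpose_sub, hA.transpose_eq_neg, hB.transpose_eq_neg, neg_sub, neg_sub_neg]
  diag_eq_zero i := by simp [hA.diag_eq_zero, hB.diag_eq_zero]

end Ring

section CommRing

variable {R n : Type*} [CommRing R]

theorem IsAlternating.dotProduct_mulVec_self [Fintype n] {A : Matrix n n R} (hA : IsAlternating A)
    (x : n → R) : x ⬝ᵥ A *ᵥ x = 0 := by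
  have hsum : x ⬝ᵥ A *ᵥ x = ∑ z : n × n, x z.1 * (A z.1 z.2 * x z.2) := by
    simp only [dotProduct, mulVec, Finset.mul_sum, Fintype.sum_prod_type]
  rw [hsum]
  refine Finset.sum_involution (fun z _ ↦ z.swap) (fun z _ ↦ ?_) (fun z _ hz hswap ↦ hz ?_)
    (fun _ _ ↦ Finset.mem_univ _) fun z _ ↦ z.swap_swap
  · simp only [Prod.fst_swap, Prod.snd_swap, hA.apply_swap z.1 z.2]
    ring
  · have h12 : z.2 = z.1 := congrArg Prod.fst hswap
    simp [h12, hA.diag_eq_zero]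

theorem IsAlternating.transpose_mul_mul {m : Type*} [Fintype m] {A : Matrix m m R}
    (hA : IsAlternating A) (M : Matrix m n R) : IsAlternating (Mᵀ * A * M) where
  transpose_eq_neg := by
    simp [Matrix.transpose_mul, hA.transpose_eq_neg, Matrix.mul_assoc]
  diag_eq_zero i := by
    rw [Matrix.mul_assoc]
    exact hA.dotProduct_mulVec_self fun j ↦ M j i

/-- The alternating matrix `x yᵀ - y xᵀ`, the coefficient matrix of the bivector `x ∧ y`. -/
def wedgeMatrix (x y : n → R) : Matrix n n R :=
  vecMulVec x y - vecMulVec y x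

theorem isAlternating_wedgeMatrix (x y : n → R) :
    IsAlternating (wedgeMatrix x y) where
  transpose_eq_neg := by simp [wedgeMatrix, transpose_sub, transpose_vecMulVec]
  diag_eq_zero i := by simp [wedgeMatrix, vecMulVec_apply, mul_comm]

theorem wedgeMatrix_mulVec [Fintype n] (x y v : n → R) :
    wedgeMatrix x y *ᵥ v = (y ⬝ᵥ v) • x - (x ⬝ᵥ v) • y := by
  simp [wedgeMatrix, sub_mulVec, vecMulVec_mulVec]

end CommRing

open MvPolynomial in
theorem IsHomogeneousSpecialization.isAlternating {F L n : Type*} [Field F] [Field L] [Algebra F L]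
    {P : Matrix n n L} {A : Matrix n n F}
    (h : IsHomogeneousSpecialization (fun z : n × n ↦ P z.1 z.2) fun z ↦ A z.1 z.2)
    (hP : IsAlternating P) : IsAlternating A where
  transpose_eq_neg := by
    ext i j
    rw [transpose_apply, neg_apply, eq_neg_iff_add_eq_zero]
    simpa using h ((isHomogeneous_X F (j, i)).add (isHomogeneous_X F (i, j)))
      (by simp [hP.apply_swap i j])
  diag_eq_zero i := by
    simpa using h (isHomogeneous_X F (i, i)) (by simp [hP.diag_eq_zero])

variable {K : Type*} [Field K]

theorem finrank_add_finrank_le_of_le_ker {V W : Type*} [AddCommGroup V] [Module K V]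
    [AddCommGroup W] [Module K W] {S T : Submodule K V} [FiniteDimensional K T] (hST : S ≤ T)
    {f : V →ₗ[K] W} (hS : S ≤ LinearMap.ker f) (hT : T.map f = ⊤) :
    finrank K S + finrank K W ≤ finrank K T := by
  have hker : S.comap T.subtype ≤ LinearMap.ker (f.domRestrict T) := fun t ht ↦ hS ht
  have hsurj : LinearMap.range (f.domRestrict T) = ⊤ := by
    rw [LinearMap.range_domRestrict, hT]
  have hle := Submodule.finrank_mono hker
  rw [(Submodule.comapSubtypeEquivOfLe hST).finrank_eq] at hle
  rw [← (f.domRestrict T).finrank_range_add_finrank_ker, hsurj, finrank_top, add_comm]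
  exact Nat.add_le_add_left hle _

variable {n : Type*} [Fintype n]

theorem IsAlternating.rank_sub_wedgeMatrix_add_two_le {A : Matrix n n K} (hA : IsAlternating A)
    {a b : n} (hab : A a b ≠ 0) :
    (A - wedgeMatrix ((A a b)⁻¹ • A a) (A b)).rank + 2 ≤ A.rank := by
  classical
  -- The image of `A'` lies in that of `A`; the coordinates `a` and `b` vanish on the former and are
  -- independent on the latter.
  set A' := A - wedgeMatrix ((A a b)⁻¹ • A a) (A b) with hA'
  let f : (n → K) →ₗ[K] K × K := (LinearMap.proj a).prod (LinearMap.proj b)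
  have hcol (i : n) : A *ᵥ Pi.single i 1 = -A i := by
    ext j
    simp [hA.apply_swap i j]
  have hmulVec (v : n → K) : A' *ᵥ v = A *ᵥ
      (v + ((A a b)⁻¹ * A b ⬝ᵥ v) • Pi.single a 1 - ((A a b)⁻¹ * A a ⬝ᵥ v) • Pi.single b 1) := by
    simp only [hA', sub_mulVec, wedgeMatrix_mulVec, mulVec_sub, mulVec_add, mulVec_smul, hcol,
      smul_dotProduct, smul_eq_mul]
    module
  have hrange : LinearMap.range A'.mulVecLin ≤ LinearMap.range A.mulVecLin := by
    rintro _ ⟨v, rfl⟩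
    exact ⟨_, (hmulVec v).symm⟩
  have hfA (v : n → K) : f (A *ᵥ v) = (A a ⬝ᵥ v, A b ⬝ᵥ v) := rfl
  have hker : LinearMap.range A'.mulVecLin ≤ LinearMap.ker f := by
    rintro _ ⟨v, rfl⟩
    rw [LinearMap.mem_ker, mulVecLin_apply, hmulVec, hfA]
    simp only [dotProduct_sub, dotProduct_add, dotProduct_smul, dotProduct_single, mul_one,
      hA.diag_eq_zero, hA.apply_swap a b, smul_eq_mul, Prod.mk_eq_zero]
    constructor <;> field_simp <;> ring
  have hsurj : (LinearMap.range A.mulVecLin).map f = ⊤ := by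
    refine Submodule.eq_top_iff'.mpr fun ⟨s, t⟩ ↦ ⟨_,
      ⟨(t * (A b a)⁻¹) • Pi.single a 1 + (s * (A a b)⁻¹) • Pi.single b 1, rfl⟩, ?_⟩
    rw [mulVecLin_apply, hfA]
    simp [hA.diag_eq_zero, hA.apply_swap a b, hab, dotProduct_add]
  simpa [Matrix.rank] using finrank_add_finrank_le_of_le_ker hrange hker hsurj

theorem IsAlternating.exists_rank_sub_wedgeMatrix_add_two_le {A : Matrix n n K}
    (hA : IsAlternating A) (h0 : A ≠ 0) : ∃ x y, (A - wedgeMatrix x y).rank + 2 ≤ A.rank := by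
  obtain ⟨a, b, hab⟩ : ∃ a b, A a b ≠ 0 := by
    by_contra! h
    exact h0 (Matrix.ext h)
  exact ⟨_, _, hA.rank_sub_wedgeMatrix_add_two_le hab⟩

theorem IsAlternating.exists_eq_sum_wedgeMatrix {k : ℕ} {A : Matrix n n K} (hA : IsAlternating A)
    (hk : A.rank ≤ 2 * k) : ∃ x y : Fin k → n → K, A = ∑ i, wedgeMatrix (x i) (y i) := by
  induction k generalizing A with
  | zero =>
    refine ⟨0, 0, ?_⟩
    by_contra h0
    obtain ⟨x, y, hxy⟩ := hA.exists_rank_sub_wedgeMatrix_add_two_le (by simpa using h0)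
    omega
  | succ k ih =>
    by_cases h0 : A = 0
    · exact ⟨0, 0, by simp [h0, wedgeMatrix]⟩
    obtain ⟨x₀, y₀, hrank⟩ := hA.exists_rank_sub_wedgeMatrix_add_two_le h0
    obtain ⟨x, y, hxy⟩ := ih (hA.sub (isAlternating_wedgeMatrix x₀ y₀)) (by omega)
    refine ⟨Fin.cons x₀ x, Fin.cons y₀ y, ?_⟩
    simp only [Fin.sum_univ_succ, Fin.cons_zero, Fin.cons_succ]
    exact eq_add_of_sub_eq' hxy

end Alternating

section GenericAlternating

open Matrix

/-- The alternating matrix with entries `u` above the diagonal. -/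
def alternatingOfUpper {R ι : Type*} [Ring R] [LinearOrder ι]
    (u : {z : ι × ι // z.1 < z.2} → R) : Matrix ι ι R :=
  .of fun i j ↦ if h : i < j then u ⟨(i, j), h⟩ else if h : j < i then -u ⟨(j, i), h⟩ else 0

section AlternatingOfUpper

variable {R S ι : Type*} [Ring R] [Ring S] [LinearOrder ι]

theorem isAlternating_alternatingOfUpper (u : {z : ι × ι // z.1 < z.2} → R) :
    IsAlternating (alternatingOfUpper u) where
  transpose_eq_neg := by
    ext i j
    simp only [alternatingOfUpper, transpose_apply, of_apply]
    rcases lt_trichotomy i j with h | rfl | h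
    · simp [h, h.not_gt]
    · simp
    · simp [h, h.not_gt]
  diag_eq_zero i := by simp [alternatingOfUpper]

theorem alternatingOfUpper_apply (u : {z : ι × ι // z.1 < z.2} → R) (z : {z : ι × ι // z.1 < z.2}) :
    alternatingOfUpper u z.1.1 z.1.2 = u z :=
  dif_pos z.2

theorem alternatingOfUpper_map (f : R →+* S) (u : {z : ι × ι // z.1 < z.2} → R) :
    (alternatingOfUpper u).map f = alternatingOfUpper (f ∘ u) := by
  ext i j
  simp only [alternatingOfUpper, map_apply, of_apply]
  split_ifs <;> simp

theorem IsAlternating.alternatingOfUpper_eq {A : Matrix ι ι R} (hA : IsAlternating A) :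
    (alternatingOfUpper fun z ↦ A z.1.1 z.1.2) = A := by
  ext i j
  simp only [alternatingOfUpper, of_apply]
  split_ifs with hij hji
  · rfl
  · rw [hA.apply_swap i j, neg_neg]
  · rw [le_antisymm (not_lt.mp hji) (not_lt.mp hij), hA.diag_eq_zero]

end AlternatingOfUpper

theorem exists_isAlternating_det_ne_zero (R : Type*) [CommRing R] [Nontrivial R] (k : ℕ) :
    ∃ A : Matrix (Fin (2 * k)) (Fin (2 * k)) R, IsAlternating A ∧ A.det ≠ 0 := by
  let e : Fin (2 * k) ≃ Fin k ⊕ Fin k := (finCongr (two_mul k)).trans finSumFinEquiv.symm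
  refine ⟨(J (Fin k) R).submatrix e e, ⟨?_, fun i ↦ ?_⟩, ?_⟩
  · rw [transpose_submatrix, J_transpose, submatrix_neg, Pi.neg_apply, Pi.neg_apply]
  · rw [submatrix_apply]
    cases e i <;> simp [J]
  · rw [det_submatrix_equiv_self]
    exact (isUnit_det_J (Fin k) R).ne_zero

theorem det_alternatingOfUpper_X_ne_zero (R : Type*) [CommRing R] [Nontrivial R] {σ : Type*} {k : ℕ}
    {s : {z : Fin (2 * k) × Fin (2 * k) // z.1 < z.2} → σ} (hs : Function.Injective s) :
    (alternatingOfUpper fun z ↦ (MvPolynomial.X (s z) : MvPolynomial σ R)).det ≠ 0 := by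
  obtain ⟨A, hA, hdet⟩ := exists_isAlternating_det_ne_zero R k
  let f : MvPolynomial σ R →+* R :=
    MvPolynomial.eval (Function.extend s (fun z ↦ A z.1.1 z.1.2) 0)
  have hf : (alternatingOfUpper fun z ↦ MvPolynomial.X (s z)).map f = A := by
    rw [alternatingOfUpper_map, ← hA.alternatingOfUpper_eq]
    congr 1
    ext z
    simp [f, hs.extend_apply]
  intro h0
  rw [← hf, ← RingHom.mapMatrix_apply, ← RingHom.map_det, h0, map_zero] at hdet
  exact hdet rfl

/-- The positions, in a square matrix with rows and columns indexed by `ι ⊕ κ`, of the entries that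
determine a generic alternating matrix of rank `card ι`: those above the diagonal in the rows
indexed by `ι`. -/
abbrev FreePosition (ι κ : Type*) [LinearOrder ι] : Type _ := {z : ι × ι // z.1 < z.2} ⊕ ι × κ

namespace FreePosition

variable {ι κ : Type*} [LinearOrder ι]

/-- The row and the column of a free position, for reading off matrix entries. -/
def toProd : FreePosition ι κ → (ι ⊕ κ) × (ι ⊕ κ) :=
  Sum.elim (fun z ↦ (.inl z.1.1, .inl z.1.2)) fun z ↦ (.inl z.1, .inr z.2)

theorem card [Fintype ι] [Fintype κ] : Fintype.card (FreePosition ι κ) =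
    (Fintype.card ι).choose 2 + Fintype.card ι * Fintype.card κ := by
  rw [Fintype.card_sum, Fintype.card_subtype, Fintype.card_product_filter_lt, Fintype.card_prod]

theorem exists_isAlternating_rank_le {R : Type*} [CommRing R] [StrongRankCondition R]
    [Fintype ι] [Fintype κ] (u : FreePosition ι κ → R)
    (hu : IsUnit (alternatingOfUpper (u ∘ Sum.inl)).det) :
    ∃ P : Matrix (ι ⊕ κ) (ι ⊕ κ) R, IsAlternating P ∧ P.rank ≤ Fintype.card ι ∧
      ∀ s : FreePosition ι κ, P s.toProd.1 s.toProd.2 = u s := by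
  classical
  let B := alternatingOfUpper (u ∘ Sum.inl)
  let C : Matrix ι κ R := .of fun i j ↦ u (.inr (i, j))
  let M : Matrix ι (ι ⊕ κ) R := fromCols 1 (B⁻¹ * C)
  have hBM : B * M = fromCols B C := by
    rw [mul_fromCols, Matrix.mul_one, mul_nonsing_inv_cancel_left _ _ hu]
  have hMBM (i : ι) (j : ι ⊕ κ) : (Mᵀ * B * M) (.inl i) j = fromCols B C i j := by
    rw [Matrix.mul_assoc, hBM, transpose_fromCols]
    cases j <;> simp [fromRows_mul]
  refine ⟨Mᵀ * B * M, (isAlternating_alternatingOfUpper _).transpose_mul_mul M, ?_, ?_⟩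
  · exact (rank_mul_le_right _ _).trans (rank_le_card_height _)
  · rintro (z | z)
    · exact (hMBM _ _).trans (alternatingOfUpper_apply _ z)
    · exact hMBM _ _

end FreePosition

theorem exists_generic_isAlternating_rank_le.{u, v} (F : Type u) [Field F] (k : ℕ)
    (κ : Type v) [Fintype κ] :
    ∃ (L : Type (max u v)) (_ : Field L) (_ : Algebra F L)
      (P : Matrix (Fin (2 * k) ⊕ κ) (Fin (2 * k) ⊕ κ) L), IsAlternating P ∧ P.rank ≤ 2 * k ∧
      AlgebraicIndependent F fun s : FreePosition (Fin (2 * k)) κ ↦ P s.toProd.1 s.toProd.2 := by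
  let R := MvPolynomial (FreePosition (Fin (2 * k)) κ) F
  let L := FractionRing R
  let ξ (s : FreePosition (Fin (2 * k)) κ) : L := algebraMap R L (.X s)
  have hdet : IsUnit (alternatingOfUpper (ξ ∘ Sum.inl)).det := by
    have hmap : (alternatingOfUpper fun z ↦ (.X (.inl z) : R)).map (algebraMap R L) =
        alternatingOfUpper (ξ ∘ Sum.inl) := alternatingOfUpper_map _ _
    rw [← hmap, ← RingHom.mapMatrix_apply, ← RingHom.map_det, isUnit_iff_ne_zero]
    exact (map_ne_zero_iff _ (IsFractionRing.injective _ L)).mpr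
      (det_alternatingOfUpper_X_ne_zero F Sum.inl_injective)
  obtain ⟨P, hP, hrank, hent⟩ := FreePosition.exists_isAlternating_rank_le ξ hdet
  refine ⟨L, inferInstance, inferInstance, P, hP, by simpa using hrank, ?_⟩
  simp only [hent]
  exact (MvPolynomial.algebraicIndependent_X _ F).map' (f := IsScalarTower.toAlgHom F R L)
    (IsFractionRing.injective _ L)

end GenericAlternating

theorem card_le_finrank_of_forall_isAlternating {F L H n σ : Type*} [Field F] [IsAlgClosed F]
    [Field L] [Algebra F L] [AddCommGroup H] [Module F H] [FiniteDimensional F H] [Fintype n]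
    [Fintype σ] {P : Matrix n n L} (hP : IsAlternating P) {r : ℕ} (hr : P.rank ≤ r)
    {s : σ → n × n} (hs : AlgebraicIndependent F fun t ↦ P (s t).1 (s t).2)
    (γ : Matrix n n F →ₗ[F] H)
    (hγ : ∀ A, IsAlternating A → A.rank ≤ r → A ≠ 0 → γ A ≠ 0) :
    Fintype.card σ ≤ finrank F H := by
  have hind : AlgebraicIndependent F ((fun z : n × n ↦ P z.1 z.2) ∘ s) := hs
  let e : Matrix n n F ≃ₗ[F] (n × n → F) := (LinearEquiv.curry F F n n).symm
  refine card_le_finrank_of_forall_map_ne_zero hind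
    (γ ∘ₗ e.symm.toLinearMap) fun a ha₀ ha ↦ ?_
  obtain ⟨A, rfl⟩ := e.surjective a
  have hA : γ A ≠ 0 :=
    hγ A (ha.isAlternating hP) (ha.rank_le hr) fun h0 ↦ ha₀ (by rw [h0, map_zero])
  rwa [LinearMap.comp_apply, LinearEquiv.coe_coe, e.symm_apply_apply]

theorem choose_two_add_mul_le_finrank_of_forall_isAlternating {F H κ : Type*} [Field F]
    [IsAlgClosed F] [AddCommGroup H] [Module F H] [FiniteDimensional F H] [Fintype κ] {k : ℕ}
    (γ : Matrix (Fin (2 * k) ⊕ κ) (Fin (2 * k) ⊕ κ) F →ₗ[F] H)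
    (hγ : ∀ A, IsAlternating A → A.rank ≤ 2 * k → A ≠ 0 → γ A ≠ 0) :
    (2 * k).choose 2 + 2 * k * Fintype.card κ ≤ finrank F H := by
  obtain ⟨L, _, _, P, hP, hrank, hind⟩ := exists_generic_isAlternating_rank_le F k κ
  have hcard := card_le_finrank_of_forall_isAlternating hP hrank hind γ hγ
  rwa [FreePosition.card, Fintype.card_fin] at hcard

section Bivector

section CoeffMatrix

variable {R V n : Type*} [CommRing R] [AddCommGroup V] [Module R V]

/-- The coefficient matrix of a bivector in a basis `b`: the alternating matrix `A` such that the
bivector is the sum of the `A i j • (b i ∧ b j)` over `i < j`, for any linear order on `n`. -/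
noncomputable def coeffMatrix (b : Basis n R V) : ⋀[R]^2 V →ₗ[R] Matrix n n R :=
  LinearMap.pi fun i ↦ LinearMap.pi fun j ↦
    exteriorPower.pairingDual R V 2 (exteriorPower.ιMulti R 2 ![b.coord i, b.coord j])

theorem coeffMatrix_apply (b : Basis n R V) (w : ⋀[R]^2 V) (i j : n) :
    coeffMatrix b w i j =
      exteriorPower.pairingDual R V 2 (exteriorPower.ιMulti R 2 ![b.coord i, b.coord j]) w :=
  rfl

theorem coeffMatrix_ιMulti (b : Basis n R V) (x y : V) :
    coeffMatrix b (exteriorPower.ιMulti R 2 ![x, y]) = wedgeMatrix (b.repr x) (b.repr y) := by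
  ext i j
  rw [coeffMatrix_apply, exteriorPower.pairingDual_ιMulti_ιMulti, Matrix.det_fin_two]
  simp [wedgeMatrix, Matrix.vecMulVec_apply, mul_comm]

theorem coeffMatrix_injective (b : Basis n R V) : Function.Injective (coeffMatrix b) := by
  let : LinearOrder n := IsWellOrder.linearOrder WellOrderingRel
  intro v w hvw
  refine (b.exteriorPower 2).ext_elem fun s ↦ ?_
  let i := Set.powersetCard.ofFinEmbEquiv.symm s
  have hdual (u : ⋀[R]^2 V) : (b.exteriorPower 2).repr u s = coeffMatrix b u (i 0) (i 1) := by
    rw [exteriorPower.basis_repr_apply]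
    have hi : b.coord ∘ i = ![b.coord (i 0), b.coord (i 1)] := by
      ext t : 1
      fin_cases t <;> rfl
    rw [coeffMatrix_apply, ← hi]
    rfl
  rw [hdual, hdual, hvw]

end CoeffMatrix

variable {K V : Type*} [Field K] [AddCommGroup V] [Module K V]

theorem exists_coeffMatrix_sum_ιMulti_eq {n : Type*} [Fintype n] (b : Basis n K V) {k : ℕ}
    {A : Matrix n n K} (hA : IsAlternating A) (hk : A.rank ≤ 2 * k) : ∃ x y : Fin k → V,
      coeffMatrix b (∑ i, exteriorPower.ιMulti K 2 ![x i, y i]) = A := by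
  obtain ⟨x, y, rfl⟩ := hA.exists_eq_sum_wedgeMatrix hk
  refine ⟨fun i ↦ b.equivFun.symm (x i), fun i ↦ b.equivFun.symm (y i), ?_⟩
  simp only [map_sum, coeffMatrix_ιMulti, ← b.equivFun_apply, LinearEquiv.apply_symm_apply]

theorem choose_two_add_mul_le_finrank [IsAlgClosed K] [FiniteDimensional K V] {H : Type*}
    [AddCommGroup H] [Module K H] [FiniteDimensional K H] {k m : ℕ}
    (hV : finrank K V = 2 * k + m) (ψ : (⋀[K]^2 V) →ₗ[K] H)
    (hψ : ∀ v : ⋀[K]^2 V, ψ v = 0 → v ≠ 0 →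
      ¬ ∃ x y : Fin k → V, v = ∑ i, exteriorPower.ιMulti K 2 ![x i, y i]) :
    (2 * k).choose 2 + 2 * k * m ≤ finrank K H := by
  let b : Basis (Fin (2 * k) ⊕ Fin m) K V :=
    (finBasisOfFinrankEq K V hV).reindex finSumFinEquiv.symm
  obtain ⟨g, hg⟩ := (coeffMatrix b).exists_leftInverse_of_injective
    (LinearMap.ker_eq_bot.mpr (coeffMatrix_injective b))
  have hγ (A) (hA : IsAlternating A) (hrank : A.rank ≤ 2 * k) (h0 : A ≠ 0) : (ψ ∘ₗ g) A ≠ 0 := by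
    obtain ⟨x, y, rfl⟩ := exists_coeffMatrix_sum_ιMulti_eq b hA hrank
    intro hw
    rw [LinearMap.comp_apply, ← LinearMap.comp_apply g, hg, LinearMap.id_apply] at hw
    exact hψ _ hw (fun hw₀ ↦ h0 (by rw [hw₀, map_zero])) ⟨x, y, rfl⟩
  simpa using choose_two_add_mul_le_finrank_of_forall_isAlternating (ψ ∘ₗ g) hγ

end Bivector

theorem choose_two_le_choose_two_two_mul_div_two_add (q : ℕ) :
    q.choose 2 ≤ (2 * (q / 2)).choose 2 + 2 * (q / 2) * (q % 2) := by
  obtain ⟨k, rfl | rfl⟩ := q.even_or_odd'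
  · simp
  · have hdiv : (2 * k + 1) / 2 = k := by omega
    have hmod : (2 * k + 1) % 2 = 1 := by omega
    rw [hdiv, hmod, show (2 * k + 1).choose 2 = (2 * k).choose 1 + (2 * k).choose 2 from
      Nat.choose_succ_succ' _ _, Nat.choose_one_right]
    omega

theorem choose_two_add_choose_two_succ (n : ℕ) : n.choose 2 + (n + 1).choose 2 = n ^ 2 := by
  qify
  rw [Nat.cast_choose_two, Nat.cast_choose_two]
  push_cast
  ring

theorem stmt2_general {K V H : Type*} [Field K] [IsAlgClosed K]
    [AddCommGroup V] [Module K V] [FiniteDimensional K V]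
    [AddCommGroup H] [Module K H] [FiniteDimensional K H]
    (q d : ℕ) (hq : finrank K V = q) (hd : 1 ≤ d) (ψ : (⋀[K]^2 V) →ₗ[K] H)
    (hker : ∀ v : ⋀[K]^2 V, ψ v = 0 → v ≠ 0 → ¬ ∃ x y : Fin (min (q / 2) (d - 1)) → V,
      v = ∑ i, exteriorPower.ιMulti K 2 ![x i, y i]) :
    (q ≤ 2 * d - 1 → (q.choose 2 : ℤ) ≤ finrank K H) ∧
    (2 * d ≤ q → 2 * ((d : ℤ) - 1) * q - ((2 * d - 1).choose 2 : ℤ) ≤ finrank K H) := by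
  refine ⟨fun hle ↦ ?_, fun hge ↦ ?_⟩
  · rw [min_eq_left (by omega)] at hker
    have h := choose_two_add_mul_le_finrank (m := q % 2) (by omega) ψ hker
    exact_mod_cast (choose_two_le_choose_two_two_mul_div_two_add q).trans h
  · obtain ⟨k, rfl⟩ := Nat.exists_eq_add_of_le' hd
    obtain ⟨m, rfl⟩ := Nat.exists_eq_add_of_le (show 2 * k ≤ q by omega)
    rw [min_eq_right (by omega), Nat.add_sub_cancel] at hker
    have h := choose_two_add_mul_le_finrank hq ψ hker
    have hsq := choose_two_add_choose_two_succ (2 * k)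
    rw [show 2 * (k + 1) - 1 = 2 * k + 1 by omega]
    zify at h hsq
    push_cast
    linarith

theorem wedge_eq_ιMulti {V : Type*} [AddCommGroup V] [Module ℂ V] (x y : V) :
    wedge x y = exteriorPower.ιMulti ℂ 2 ![x, y] :=
  Subtype.ext (by simp [wedge, ExteriorAlgebra.ιMulti_apply])

/-- **Theorem 1.1** (linear-algebra content): let `ψ : ⋀²V → H` be a linear map of
finite-dimensional complex vector spaces with `dim V = q ≥ 1`, let `d ≥ 2`, and suppose that
every non-zero element of `ker ψ` has rank bigger than `2·min(⌊q/2⌋, d-1)`, i.e. no non-zero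
element of `ker ψ` is a sum of at most `min(⌊q/2⌋, d-1)` decomposable bivectors. Then
`dim H ≥ C(q,2)` if `q ≤ 2d-1`, and `dim H ≥ 2(d-1)q - C(2d-1, 2)` if `q ≥ 2d`. -/
theorem stmt2 {V H : Type*} [AddCommGroup V] [Module ℂ V] [FiniteDimensional ℂ V]
    [AddCommGroup H] [Module ℂ H] [FiniteDimensional ℂ H]
    (q d : ℕ) (hq : Module.finrank ℂ V = q) (hq1 : 1 ≤ q) (hd : 2 ≤ d)
    (ψ : (⋀[ℂ]^2 V) →ₗ[ℂ] H)
    (hker : ∀ v : ⋀[ℂ]^2 V, ψ v = 0 → v ≠ 0 →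
      ¬ ∃ x y : Fin (min (q / 2) (d - 1)) → V, v = ∑ i, wedge (x i) (y i)) :
    (q ≤ 2 * d - 1 → (q.choose 2 : ℤ) ≤ (Module.finrank ℂ H : ℤ)) ∧
    (2 * d ≤ q → (2 * ((d : ℤ) - 1) * q - ((2 * d - 1).choose 2 : ℤ)
        ≤ (Module.finrank ℂ H : ℤ))) := by
  exact stmt2_general q d hq (by omega) ψ (by simpa only [wedge_eq_ιMulti] using hker)
end
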